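/- There exists a universal constant C > 0 such that the following holds for all positive integers n ≥ 2 and d. Given symmetric matrices A_1, ..., A_n ∈ ℝ^{d×d} each satisfying ‖A_i‖_op ≤ 1 and ‖A_i‖_F² ≤ n / (log n)³, there exist signs x_1, ..., x_n ∈ {−1, +1} such that ‖∑_{i=1}^n x_i A_i‖_op ≤ C √n. -/

import Mathlib

open MeasureTheory ProbabilityTheory

/-- Operator norm (largest singular value) of a real matrix, as the norm of the
induced linear map between Euclidean spaces. -/
noncomputable def opNorm {m n : Type*} [Fintype m] [Fintype n] [DecidableEq n]
    (M : Matrix m n ℝ) : ℝ :=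
  ‖LinearMap.toContinuousLinearMap (Matrix.toEuclideanLin M)‖

/-- Squared Frobenius norm of a real matrix. -/
noncomputable def frobNormSq {m n : Type*} [Fintype m] [Fintype n]
    (M : Matrix m n ℝ) : ℝ := ∑ i, ∑ j, (M i j) ^ 2

/-! Signs are found by iterated partial colouring. Starting from a fractional colouring `x₀`, look
at all moves `z` inside the cube together with a positive definite barrier `Y` such that
`Y + ∑ i, z i • A i` is bounded by a multiple of `σ`, with an allowance growing with `|z| ^ 2`, and
such that a potential in `Y⁻¹` stays at most `1`. A feasible pair maximising `|z| ^ 2` must have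
many coordinates of `x₀ + z` equal to `±1`. Otherwise there is a large orthonormal system of
directions `y` orthogonal to `z` and supported on the free coordinates. Replace `z` by `z - e • y`
and `Y` by `Y + e • ∑ i, y i • A i + e ^ 2 • D`, which leaves `Y + ∑ i, z i • A i` unchanged except
for the drift `D`. On average over the system the drift outweighs the second-order growth of the
potential, so that some short move is feasible and increases `|z| ^ 2`.

The potential consists of traces of powers of order `log n` of matrices built from `Y⁻¹`. Its
second-order growth involves the operator norm of the block matrix `(B i * S * B k)`, where `B` is
the family `A` with the top half of its covariance spectrum projected away; by the truncation, this
norm is at most a constant times the bound for the `‖A i‖_F ^ 2`, which is where `n / (log n) ^ 3`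
enters. Two-sided bounds come from working with `diag(A, -A)`. Each round freezes a quarter of the
coordinates, and the costs of the rounds form a geometric series. To have `log d` comparable with
`log n`, one first compresses to the eigenvectors of `∑ i, A i ^ 2` with eigenvalue above `1`: there
are `O(n ^ 2)` of them, and on the complement any signing costs at most `√n`. -/

namespace MatrixSpencer

open Matrix Filter Topology
open Fintype (linearCombination)
open scoped MatrixOrder

/-! ### Loewner order and trace inequalities -/

section LoewnerOrder

lemma posDef_of_smul_one_le {J : Type*} [DecidableEq J] {X : Matrix J J ℝ} {c : ℝ} (hc : 0 < c)
    (h : c • 1 ≤ X) : X.PosDef := by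
  have := (PosDef.one.smul hc).add_posSemidef (le_iff.1 h)
  rwa [add_sub_cancel] at this

lemma isSelfAdjoint_of_mem_Icc {J : Type*} [DecidableEq J] {X : Matrix J J ℝ} {c : ℝ}
    (hX : X ∈ Set.Icc (-(c • (1 : Matrix J J ℝ))) (c • 1)) : IsSelfAdjoint X := by
  have hc : (c • (1 : Matrix J J ℝ)).IsHermitian := by
    rw [IsHermitian, conjTranspose_smul, star_trivial, conjTranspose_one]
  have hsum : (X - -(c • 1)).IsHermitian := (le_iff.1 hX.1).isHermitian
  have := hsum.sub hc
  rwa [sub_neg_eq_add, add_sub_cancel_right] at this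

variable {J : Type*} [Fintype J] {A B X : Matrix J J ℝ} {c : ℝ}

lemma dotProduct_mulVec_mono (h : A ≤ B) (w : J → ℝ) : w ⬝ᵥ A *ᵥ w ≤ w ⬝ᵥ B *ᵥ w := by
  have : 0 ≤ w ⬝ᵥ (B - A) *ᵥ w := by simpa using (le_iff.1 h).dotProduct_mulVec_nonneg w
  rwa [sub_mulVec, dotProduct_sub, sub_nonneg] at this

lemma le_of_dotProduct_mulVec_le (hA : IsSelfAdjoint A) (hB : IsSelfAdjoint B)
    (h : ∀ w : J → ℝ, w ⬝ᵥ A *ᵥ w ≤ w ⬝ᵥ B *ᵥ w) : A ≤ B := by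
  refine le_iff.2 (.of_dotProduct_mulVec_nonneg (hB.sub hA) fun w => ?_)
  simpa only [star_trivial, sub_mulVec, dotProduct_sub, sub_nonneg] using h w

lemma dotProduct_mul_self_mulVec (hX : IsSelfAdjoint X) (w : J → ℝ) :
    w ⬝ᵥ (X * X) *ᵥ w = (X *ᵥ w) ⬝ᵥ (X *ᵥ w) := by
  have hX' : Xᵀ = X := hX
  rw [← mulVec_mulVec, dotProduct_mulVec, ← mulVec_transpose, hX']

variable [DecidableEq J]

lemma dotProduct_smul_one_mulVec (w : J → ℝ) :
    w ⬝ᵥ (c • (1 : Matrix J J ℝ)) *ᵥ w = c * (w ⬝ᵥ w) := by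
  rw [smul_mulVec, one_mulVec, dotProduct_smul, smul_eq_mul]

lemma sandwich_mul_nonneg {a b : ℝ} (ha : a • 1 ≤ X) (hb : X ≤ b • 1) :
    0 ≤ (X - a • 1) * (b • 1 - X) := by
  refine Commute.mul_nonneg (sub_nonneg.2 ha) (sub_nonneg.2 hb) ?_
  have hone (t : ℝ) : Commute X (t • 1) := (Commute.one_right X).smul_right t
  exact ((hone b).sub_right (Commute.refl X)).sub_left
    (((Commute.one_left _).smul_left a).sub_right ((hone a).symm))

lemma mul_self_le_sq_smul_one (hX : X ∈ Set.Icc (-(c • (1 : Matrix J J ℝ))) (c • 1)) :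
    X * X ≤ c ^ 2 • 1 := by
  have h := sandwich_mul_nonneg (a := -c) (by rw [neg_smul]; exact hX.1) hX.2
  have hfactor : (X - -c • 1) * (c • 1 - X) = c ^ 2 • 1 - X * X := by
    simp only [neg_smul, sub_neg_eq_add, add_mul, mul_sub, smul_mul_assoc, mul_smul_comm, one_mul,
      mul_one, smul_add, smul_smul, pow_two]
    abel
  rwa [hfactor, sub_nonneg] at h

lemma mulVec_dotProduct_self_le (hX : X ∈ Set.Icc (-(c • (1 : Matrix J J ℝ))) (c • 1))
    (w : J → ℝ) : (X *ᵥ w) ⬝ᵥ (X *ᵥ w) ≤ c ^ 2 * (w ⬝ᵥ w) := by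
  rw [← dotProduct_mul_self_mulVec (isSelfAdjoint_of_mem_Icc hX), ← dotProduct_smul_one_mulVec]
  exact dotProduct_mulVec_mono (mul_self_le_sq_smul_one hX) w

lemma inv_mul_of_posDef (hX : X.PosDef) : X⁻¹ * X = 1 :=
  nonsing_inv_mul X ((isUnit_iff_isUnit_det X).1 hX.isUnit)

lemma mul_inv_of_posDef (hX : X.PosDef) : X * X⁻¹ = 1 :=
  mul_nonsing_inv X ((isUnit_iff_isUnit_det X).1 hX.isUnit)

lemma commute_inv_of_posDef (hX : X.PosDef) : Commute X⁻¹ X :=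
  (inv_mul_of_posDef hX).trans (mul_inv_of_posDef hX).symm

lemma smul_one_le_inv (hX : X.PosDef) (hc : 0 < c) (h : X ≤ c • 1) : c⁻¹ • 1 ≤ X⁻¹ := by
  have hcomm : Commute X⁻¹ (c • 1 - X) :=
    ((Commute.one_right _).smul_right c).sub_right (commute_inv_of_posDef hX)
  have hmul := hcomm.mul_nonneg hX.inv.posSemidef.nonneg (sub_nonneg.2 h)
  rw [mul_sub, inv_mul_of_posDef hX, mul_smul_comm, mul_one, sub_nonneg] at hmul
  simpa only [inv_smul_smul₀ hc.ne'] using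
    smul_le_smul_of_nonneg_left hmul (inv_nonneg.2 hc.le)

lemma smul_one_le_of_inv_le (hX : X.PosDef) (hc : 0 < c) (h : X⁻¹ ≤ c • 1) : c⁻¹ • 1 ≤ X := by
  simpa only [nonsing_inv_nonsing_inv _ ((isUnit_iff_isUnit_det X).1 hX.isUnit)] using
    smul_one_le_inv hX.inv hc h

end LoewnerOrder

section Trace

variable {J : Type*} [Fintype J] {A B P : Matrix J J ℝ}

lemma trace_mul_nonneg (hA : 0 ≤ A) (hB : 0 ≤ B) : 0 ≤ (A * B).trace := by
  classical
  obtain ⟨C, rfl⟩ := CStarAlgebra.nonneg_iff_eq_star_mul_self.1 hA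
  rw [Matrix.mul_assoc, trace_mul_comm]
  exact (nonneg_iff_posSemidef.1 (star_right_conjugate_nonneg hB C)).trace_nonneg

lemma trace_mul_le_trace_mul (hP : 0 ≤ P) (h : A ≤ B) : (P * A).trace ≤ (P * B).trace := by
  have := trace_mul_nonneg hP (sub_nonneg.2 h)
  rwa [Matrix.mul_sub, trace_sub, sub_nonneg] at this

variable [DecidableEq J] {K L : Matrix J J ℝ}

lemma exists_trace_pow_mul_pow_mul_eq_sum (hK : K.IsHermitian) (hL : IsSelfAdjoint L) :
    ∃ N : Matrix J J ℝ, (∀ i j, N i j = N j i) ∧ ∀ a b : ℕ, (K ^ a * L * K ^ b * L).trace =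
      ∑ i, ∑ j, hK.eigenvalues i ^ a * hK.eigenvalues j ^ b * N i j ^ 2 := by
  set φ := Unitary.conjStarAlgAut ℝ (Matrix J J ℝ) hK.eigenvectorUnitary
  have htrace (M : Matrix J J ℝ) : (φ M).trace = M.trace := by
    rw [Unitary.conjStarAlgAut_apply, trace_mul_comm, ← Matrix.mul_assoc,
      Unitary.coe_star_mul_self, Matrix.one_mul]
  have hpow (a : ℕ) : K ^ a = φ (diagonal fun i => hK.eigenvalues i ^ a) := by
    conv_lhs => rw [hK.spectral_theorem]
    rw [← map_pow, diagonal_pow]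
    rfl
  obtain ⟨N, rfl⟩ : ∃ N, φ N = L := ⟨φ.symm L, φ.apply_symm_apply L⟩
  have hN : star N = N := EquivLike.injective φ ((map_star φ N).trans hL.star_eq)
  have hsymm (i j : J) : N i j = N j i := by simpa using (congrFun₂ hN i j).symm
  refine ⟨N, hsymm, fun a b => ?_⟩
  rw [hpow, hpow, ← map_mul, ← map_mul, ← map_mul, htrace]
  simp only [trace, diag_apply, mul_apply (M := diagonal _ * N * diagonal _), mul_diagonal,
    diagonal_mul]
  exact Finset.sum_congr rfl fun i _ => Finset.sum_congr rfl fun j _ => by rw [hsymm j i]; ring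

lemma pow_mul_pow_add_pow_mul_pow_le {x y : ℝ} (hx : 0 ≤ x) (hy : 0 ≤ y) (a b : ℕ) :
    x ^ a * y ^ b + y ^ a * x ^ b ≤ x ^ (a + b) + y ^ (a + b) := by
  have hmono : 0 ≤ (x ^ a - y ^ a) * (x ^ b - y ^ b) := by
    rcases le_total x y with h | h
    · exact mul_nonneg_of_nonpos_of_nonpos (sub_nonpos.2 (by gcongr)) (sub_nonpos.2 (by gcongr))
    · exact mul_nonneg (sub_nonneg.2 (by gcongr)) (sub_nonneg.2 (by gcongr))
  rw [pow_add, pow_add]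
  linarith

lemma trace_pow_mul_pow_mul_le (hK : 0 ≤ K) (hL : IsSelfAdjoint L) (a b : ℕ) :
    (K ^ a * L * K ^ b * L).trace ≤ (K ^ (a + b) * L * L).trace := by
  have hK' := nonneg_iff_posSemidef.1 hK
  obtain ⟨N, hN, htr⟩ := exists_trace_pow_mul_pow_mul_eq_sum hK'.1 hL
  set l := hK'.1.eigenvalues
  have hl : ∀ i, 0 ≤ l i := hK'.eigenvalues_nonneg
  have hdouble (a b : ℕ) : 2 * (K ^ a * L * K ^ b * L).trace =
      ∑ i, ∑ j, (l i ^ a * l j ^ b + l j ^ a * l i ^ b) * N i j ^ 2 := by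
    have hswap : (K ^ a * L * K ^ b * L).trace = ∑ i, ∑ j, l j ^ a * l i ^ b * N i j ^ 2 := by
      rw [htr, Finset.sum_comm]
      simp only [hN]
    rw [two_mul]
    nth_rewrite 1 [htr]
    simp only [hswap, add_mul, Finset.sum_add_distrib]
  have htop : K ^ (a + b) * L * L = K ^ (a + b) * L * K ^ 0 * L := by rw [pow_zero, mul_one]
  refine le_of_mul_le_mul_left ?_ (zero_lt_two (α := ℝ))
  rw [htop, hdouble, hdouble]
  refine Finset.sum_le_sum fun i _ => Finset.sum_le_sum fun j _ => ?_
  simpa only [pow_zero, mul_one] using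
    mul_le_mul_of_nonneg_right (pow_mul_pow_add_pow_mul_pow_le (hl i) (hl j) a b)
      (sq_nonneg (N i j))

lemma le_trace_smul_one (hK : 0 ≤ K) : K ≤ K.trace • 1 := by
  have hK' := nonneg_iff_posSemidef.1 hK
  rw [← Algebra.algebraMap_eq_smul_one, le_algebraMap_iff_spectrum_le]
  intro x hx
  obtain ⟨i, rfl⟩ := hK'.1.spectrum_real_eq_range_eigenvalues ▸ hx
  rw [hK'.1.trace_eq_sum_eigenvalues]
  exact Finset.single_le_sum (f := hK'.1.eigenvalues) (fun j _ => hK'.eigenvalues_nonneg j)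
    (Finset.mem_univ i)

lemma le_one_of_trace_pow_le_one {p : ℕ} (hp : p ≠ 0) (hK : 0 ≤ K) (h : (K ^ p).trace ≤ 1) :
    K ≤ 1 := by
  have hKp : 0 ≤ K ^ p := ((nonneg_iff_posSemidef.1 hK).pow p).nonneg
  have hpow : K ^ p ≤ algebraMap ℝ _ 1 := by
    rw [Algebra.algebraMap_eq_smul_one]
    exact (le_trace_smul_one hKp).trans (smul_le_smul_of_nonneg_right h zero_le_one)
  rw [← map_one (algebraMap ℝ _), le_algebraMap_iff_spectrum_le]
  intro x hx
  rw [le_algebraMap_iff_spectrum_le] at hpow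
  have hx0 : 0 ≤ x := spectrum_nonneg_of_nonneg hK hx
  exact (pow_le_one_iff_of_nonneg hx0 hp).1 (hpow _ (spectrum.pow_mem_pow K p hx))

lemma trace_pow_le {c : ℝ} (hK : 0 ≤ K) (hc : 0 ≤ c) (h : K ≤ c • 1) (p : ℕ) :
    (K ^ p).trace ≤ Fintype.card J * c ^ p := by
  induction p with
  | zero => simp
  | succ p ih =>
    calc (K ^ (p + 1)).trace = (K ^ p * K).trace := by rw [pow_succ]
      _ ≤ (K ^ p * (c • 1)).trace :=
          trace_mul_le_trace_mul ((nonneg_iff_posSemidef.1 hK).pow p).nonneg h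
      _ = (K ^ p).trace * c := by rw [mul_smul_comm, mul_one, trace_smul, smul_eq_mul, mul_comm]
      _ ≤ Fintype.card J * c ^ p * c := by gcongr
      _ = Fintype.card J * c ^ (p + 1) := by ring

end Trace

/-! ### Second-order expansions -/

section Jets

variable {M N : Type*} [Ring M] [Algebra ℝ M] [TopologicalSpace M] [Ring N] [Algebra ℝ N]
  [TopologicalSpace N]

/-- `f` has the second-order expansion `f e = a + e • b + e ^ 2 • c + o(e ^ 2)` at `0`; the
remainder is carried by a continuous coefficient so that expansions can be multiplied and
inverted. -/
def HasJet (f : ℝ → M) (a b c : M) : Prop :=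
  ∃ h : ℝ → M, ContinuousAt h 0 ∧ h 0 = c ∧ ∀ᶠ e in 𝓝 (0 : ℝ), f e = a + e • b + e ^ 2 • h e

/-- The coefficient of `e` in `(a + e • b) ^ p`, for non-commuting `a` and `b`. -/
def powCoeff₁ (a b : M) : ℕ → M
  | 0 => 0
  | p + 1 => a ^ p * b + powCoeff₁ a b p * a

/-- The coefficient of `e ^ 2` in `(a + e • b + e ^ 2 • c) ^ p`, for non-commuting `a`, `b`
and `c`. -/
def powCoeff₂ (a b c : M) : ℕ → M
  | 0 => 0
  | p + 1 => a ^ p * c + powCoeff₁ a b p * b + powCoeff₂ a b c p * a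

variable {f g : ℝ → M} {a b c a' b' c' : M}

lemma HasJet.map (hf : HasJet f a b c) (φ : M →ₗ[ℝ] N) (hφ : Continuous φ) :
    HasJet (fun e => φ (f e)) (φ a) (φ b) (φ c) := by
  obtain ⟨h, hcont, rfl, heq⟩ := hf
  refine ⟨fun e => φ (h e), hφ.continuousAt.comp hcont, rfl, ?_⟩
  filter_upwards [heq] with e he
  rw [he, map_add, map_add, map_smul, map_smul]

lemma hasJet_const (a : M) : HasJet (fun _ => a) a 0 0 :=
  ⟨fun _ => 0, continuousAt_const, rfl, by simp⟩

lemma hasJet_quadratic (a b c : M) : HasJet (fun e : ℝ => a + e • b + e ^ 2 • c) a b c :=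
  ⟨fun _ => c, continuousAt_const, rfl, by simp⟩

variable [IsTopologicalRing M]

lemma HasJet.add (hf : HasJet f a b c) (hg : HasJet g a' b' c') :
    HasJet (fun e => f e + g e) (a + a') (b + b') (c + c') := by
  obtain ⟨h, hcont, rfl, hfeq⟩ := hf
  obtain ⟨k, kcont, rfl, hgeq⟩ := hg
  refine ⟨fun e => h e + k e, hcont.add kcont, rfl, ?_⟩
  filter_upwards [hfeq, hgeq] with e he ke
  rw [he, ke]
  module

variable [ContinuousSMul ℝ M]

lemma HasJet.continuousAt (hf : HasJet f a b c) : ContinuousAt f 0 := by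
  obtain ⟨h, hcont, -, heq⟩ := hf
  refine ContinuousAt.congr ?_ (heq.mono fun e he => he.symm)
  fun_prop

lemma HasJet.mul (hf : HasJet f a b c) (hg : HasJet g a' b' c') :
    HasJet (fun e => f e * g e) (a * a') (a * b' + b * a') (a * c' + b * b' + c * a') := by
  obtain ⟨h, hcont, rfl, hfeq⟩ := hf
  obtain ⟨k, kcont, rfl, hgeq⟩ := hg
  refine ⟨fun e => a * k e + b * b' + h e * a' + e • (b * k e + h e * b') + e ^ 2 • (h e * k e),
    by fun_prop, by simp, ?_⟩
  filter_upwards [hfeq, hgeq] with e he ke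
  rw [he, ke]
  simp only [mul_add, add_mul, smul_mul_assoc, mul_smul_comm]
  module

lemma HasJet.pow (hf : HasJet f a b c) (p : ℕ) :
    HasJet (fun e => f e ^ p) (a ^ p) (powCoeff₁ a b p) (powCoeff₂ a b c p) := by
  induction p with
  | zero => simpa only [pow_zero, powCoeff₁, powCoeff₂] using hasJet_const (1 : M)
  | succ p ih =>
    simp only [pow_succ]
    exact ih.mul hf

end Jets

section MatrixJets

variable {J : Type*} [Fintype J] [DecidableEq J]

lemma HasJet.inv {f : ℝ → Matrix J J ℝ} {a b c : Matrix J J ℝ} (hf : HasJet f a b c)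
    (ha : IsUnit a.det) :
    HasJet (fun e => (f e)⁻¹) a⁻¹ (-(a⁻¹ * b * a⁻¹))
      (a⁻¹ * b * a⁻¹ * b * a⁻¹ - a⁻¹ * c * a⁻¹) := by
  have hcontf : ContinuousAt f 0 := hf.continuousAt
  obtain ⟨h, hcont, rfl, heq⟩ := hf
  have hf0 : f 0 = a := by simpa using heq.self_of_nhds
  have hdet : ContinuousAt (fun e => (f e).det) 0 :=
    (Continuous.matrix_det continuous_id).continuousAt.comp hcontf
  have hdet0 : (f 0).det ≠ 0 := hf0 ▸ ha.ne_zero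
  have hinv : ContinuousAt (fun e => (f e)⁻¹) 0 := by
    simp only [Matrix.inv_def, Ring.inverse_eq_inv']
    exact (hdet.inv₀ hdet0).smul
      ((Continuous.matrix_adjugate continuous_id).continuousAt.comp hcontf)
  refine ⟨fun e => a⁻¹ * (b + e • h e) * a⁻¹ * (b + e • h e) * (f e)⁻¹ - a⁻¹ * h e * a⁻¹,
    by fun_prop, by simp [hf0], ?_⟩
  filter_upwards [heq, hdet.eventually_ne hdet0] with e he hdete
  set X := b + e • h e with hX
  have hresolvent : (f e)⁻¹ = a⁻¹ - e • (a⁻¹ * X * (f e)⁻¹) := by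
    have hfe : f e = a + e • X := by rw [he, hX]; module
    calc (f e)⁻¹ = a⁻¹ * (f e - e • X) * (f e)⁻¹ := by
          rw [hfe, add_sub_cancel_right, nonsing_inv_mul a ha, Matrix.one_mul]
      _ = a⁻¹ - e • (a⁻¹ * X * (f e)⁻¹) := by
          rw [Matrix.mul_sub, Matrix.sub_mul, Matrix.mul_assoc,
            mul_nonsing_inv _ (isUnit_iff_ne_zero.2 hdete), Matrix.mul_one, mul_smul_comm,
            smul_mul_assoc]
  calc (f e)⁻¹ = a⁻¹ - e • (a⁻¹ * X * (a⁻¹ - e • (a⁻¹ * X * (f e)⁻¹))) := by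
        rw [← hresolvent]; exact hresolvent
    _ = _ := by
        simp only [hX, Matrix.mul_sub, Matrix.mul_add, Matrix.add_mul, mul_smul_comm,
          smul_mul_assoc, Matrix.mul_assoc]
        module

variable {K L N : Matrix J J ℝ}

lemma trace_powCoeff₁_mul_le (hK : 0 ≤ K) (hL : IsSelfAdjoint L) (p r q : ℕ) :
    (powCoeff₁ K L (p + 1) * K ^ r * L * K ^ q).trace ≤
      (p + 1) * (K ^ (p + q + r) * L * L).trace := by
  have hcyclic (a b c : ℕ) :
      (K ^ a * L * K ^ b * L * K ^ c).trace ≤ (K ^ (a + c + b) * L * L).trace := by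
    rw [trace_mul_comm]
    convert trace_pow_mul_pow_mul_le hK hL (a + c) b using 2
    simp only [add_comm a c, pow_add, Matrix.mul_assoc]
  induction p generalizing r with
  | zero => simpa [powCoeff₁] using hcyclic 0 r q
  | succ p ih =>
    have hlast := hcyclic (p + 1) r q
    have hrest := ih (r + 1)
    rw [pow_succ' K r, ← Matrix.mul_assoc, show p + q + (r + 1) = p + 1 + q + r by ring] at hrest
    rw [powCoeff₁, Matrix.add_mul, Matrix.add_mul, Matrix.add_mul, trace_add]
    push_cast
    linarith

lemma trace_powCoeff₂_mul_le (hK : 0 ≤ K) (hL : IsSelfAdjoint L) (p q : ℕ) :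
    (powCoeff₂ K L N (p + 2) * K ^ q).trace ≤ (p + 2) * (K ^ (p + 1 + q) * N).trace +
      (p + 2) * (p + 1) / 2 * (K ^ (p + q) * L * L).trace := by
  have hcyclic (a c : ℕ) : (K ^ a * N * K ^ c).trace = (K ^ (a + c) * N).trace := by
    rw [trace_mul_comm, add_comm a c, pow_add, Matrix.mul_assoc]
  induction p generalizing q with
  | zero =>
    have hN : (K * N * K ^ q).trace = (K ^ (1 + q) * N).trace := by simpa using hcyclic 1 q
    have hN' : (N * K * K ^ q).trace = (K ^ (1 + q) * N).trace := by
      rw [Matrix.mul_assoc, ← pow_succ', add_comm q 1]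
      simpa using hcyclic 0 (1 + q)
    have hL' : (L * L * K ^ q).trace = (K ^ q * L * L).trace := by
      rw [trace_mul_comm, Matrix.mul_assoc]
    simp only [powCoeff₂, powCoeff₁, Matrix.add_mul, trace_add, pow_zero, pow_one, Matrix.one_mul,
      Matrix.zero_mul, zero_add, add_zero, hN, hN', hL']
    norm_num
    linarith
  | succ p ih =>
    have hfirst := trace_powCoeff₁_mul_le hK hL (p + 1) 0 q
    have hrest := ih (q + 1)
    rw [pow_succ' K q, ← Matrix.mul_assoc, show p + 1 + (q + 1) = p + 1 + 1 + q by ring,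
      show p + (q + 1) = p + 1 + q by ring] at hrest
    rw [pow_zero, Matrix.mul_one, add_zero] at hfirst
    rw [powCoeff₂, Matrix.add_mul, Matrix.add_mul, trace_add, trace_add, hcyclic]
    push_cast at hfirst ⊢
    linarith

end MatrixJets

/-! ### Matrix series -/

section DotProduct

variable {J : Type*} [Fintype J]

lemma dotProduct_self_nonneg (v : J → ℝ) : 0 ≤ v ⬝ᵥ v := by
  simpa only [star_trivial] using dotProduct_star_self_nonneg v

lemma dotProduct_self_eq_sum_sq (v : J → ℝ) : v ⬝ᵥ v = ∑ a, v a ^ 2 :=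
  Finset.sum_congr rfl fun _ _ => (pow_two _).symm

lemma dotProduct_sq_le (u v : J → ℝ) : (u ⬝ᵥ v) ^ 2 ≤ (u ⬝ᵥ u) * (v ⬝ᵥ v) := by
  rw [dotProduct_self_eq_sum_sq, dotProduct_self_eq_sum_sq]
  exact Finset.sum_mul_sq_le_sq_mul_sq _ u v

lemma add_dotProduct_self_le (u v : J → ℝ) :
    (u + v) ⬝ᵥ (u + v) ≤ 2 * (u ⬝ᵥ u) + 2 * (v ⬝ᵥ v) := by
  have := dotProduct_self_nonneg (u - v)
  simp only [add_dotProduct, dotProduct_add, sub_dotProduct, dotProduct_sub] at this ⊢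
  linarith

lemma vecMul_dotProduct_self_le {I : Type*} [Fintype I] {M : Matrix I J ℝ} {m : ℝ} (hm : 0 ≤ m)
    (hM : ∀ x : J → ℝ, (M *ᵥ x) ⬝ᵥ (M *ᵥ x) ≤ m * (x ⬝ᵥ x)) (y : I → ℝ) :
    (y ᵥ* M) ⬝ᵥ (y ᵥ* M) ≤ m * (y ⬝ᵥ y) := by
  set t := y ᵥ* M
  rcases (dotProduct_self_nonneg t).eq_or_lt with ht | ht
  · rw [← ht]
    exact mul_nonneg hm (dotProduct_self_nonneg y)
  refine le_of_mul_le_mul_left ?_ ht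
  calc (t ⬝ᵥ t) * (t ⬝ᵥ t) = (y ⬝ᵥ M *ᵥ t) ^ 2 := by rw [dotProduct_mulVec, pow_two]
    _ ≤ (y ⬝ᵥ y) * ((M *ᵥ t) ⬝ᵥ (M *ᵥ t)) := dotProduct_sq_le _ _
    _ ≤ (y ⬝ᵥ y) * (m * (t ⬝ᵥ t)) :=
        mul_le_mul_of_nonneg_left (hM t) (dotProduct_self_nonneg y)
    _ = (t ⬝ᵥ t) * (m * (y ⬝ᵥ y)) := by ring

lemma frobNormSq_eq_sum_col {I : Type*} [Fintype I] (M : Matrix I J ℝ) :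
    frobNormSq M = ∑ a, M.col a ⬝ᵥ M.col a := by
  rw [frobNormSq, Finset.sum_comm]
  simp only [dotProduct_self_eq_sum_sq, col_apply]

lemma trace_transpose_mul_self {I : Type*} [Fintype I] (M : Matrix I J ℝ) :
    (Mᵀ * M).trace = frobNormSq M :=
  (frobNormSq_eq_sum_col M).symm

lemma frobNormSq_mul_le {I : Type*} [Fintype I] {M : Matrix I J ℝ} {m : ℝ}
    (hM : ∀ x : J → ℝ, (M *ᵥ x) ⬝ᵥ (M *ᵥ x) ≤ m * (x ⬝ᵥ x)) {K : Type*} [Fintype K]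
    (X : Matrix J K ℝ) : frobNormSq (M * X) ≤ m * frobNormSq X := by
  rw [frobNormSq_eq_sum_col, frobNormSq_eq_sum_col, Finset.mul_sum]
  exact Finset.sum_le_sum fun a _ => hM (X.col a)

end DotProduct

section MatrixSeries

lemma isSelfAdjoint_linearCombination {J κ : Type*} [Fintype κ] {B : κ → Matrix J J ℝ}
    (hB : ∀ i, IsSelfAdjoint (B i)) (c : κ → ℝ) : IsSelfAdjoint (linearCombination ℝ B c) :=
  isSelfAdjoint_sum _ fun i _ => (IsSelfAdjoint.all (c i)).smul (hB i)

variable {J κ ν : Type*} [Fintype J] [Fintype κ] [Fintype ν]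

/-- The completely positive map `S ↦ ∑ i, B i * S * B i` attached to a family of symmetric
matrices; at `S = 1` it is the variance `∑ i, B i ^ 2` of the random series `∑ i, ± B i`. -/
noncomputable def conjSum (B : κ → Matrix J J ℝ) : Matrix J J ℝ →ₗ[ℝ] Matrix J J ℝ :=
  ∑ i, LinearMap.mulLeftRight ℝ (B i, B i)

/-- The matrix whose `k`-th column lists the entries of `B k`; it turns Frobenius norms of linear
combinations of `B` into Euclidean norms. -/
def familyMatrix (B : κ → Matrix J J ℝ) : Matrix (J × J) κ ℝ :=
  of fun p k => B k p.1 p.2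

/-- The family `y` satisfies Bessel's inequality, as orthonormal families do. -/
def IsBessel (y : ν → κ → ℝ) : Prop :=
  ∀ q : κ → ℝ, ∑ j, (y j ⬝ᵥ q) ^ 2 ≤ q ⬝ᵥ q

/-- The vector `∑ i, B i (S (L (ξ i)))`, in which a matrix `L` is crossed with the family `B`. -/
def crossing (B : κ → Matrix J J ℝ) (S L : Matrix J J ℝ) (ξ : κ → J → ℝ) : J → ℝ :=
  ∑ i, (B i * S * L) *ᵥ ξ i

/-- The block matrix with blocks `B i * S * B k` has operator norm at most `b ‖S‖`. -/
def CrossingBound [DecidableEq J] (B : κ → Matrix J J ℝ) (b : ℝ) : Prop :=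
  ∀ ⦃S : Matrix J J ℝ⦄ ⦃s : ℝ⦄, S ∈ Set.Icc (-(s • (1 : Matrix J J ℝ))) (s • 1) →
    ∀ ξ : κ → J → ℝ, ∑ k, crossing B S (B k) ξ ⬝ᵥ crossing B S (B k) ξ ≤
      (b * s) ^ 2 * ∑ i, ξ i ⬝ᵥ ξ i

variable {B : κ → Matrix J J ℝ} {y : ν → κ → ℝ} {S T : Matrix J J ℝ}

lemma conjSum_apply (B : κ → Matrix J J ℝ) (S : Matrix J J ℝ) :
    conjSum B S = ∑ i, B i * S * B i := by
  rw [conjSum, LinearMap.sum_apply]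
  rfl

lemma continuous_conjSum (B : κ → Matrix J J ℝ) : Continuous (conjSum B) :=
  LinearMap.continuous_of_finiteDimensional _

lemma conjSum_nonneg (hB : ∀ i, IsSelfAdjoint (B i)) (hS : 0 ≤ S) : 0 ≤ conjSum B S := by
  rw [conjSum_apply]
  exact Finset.sum_nonneg fun i _ => IsSelfAdjoint.conjugate_nonneg hS (hB i)

lemma conjSum_mono (hB : ∀ i, IsSelfAdjoint (B i)) (h : S ≤ T) : conjSum B S ≤ conjSum B T := by
  rw [← sub_nonneg, ← map_sub]
  exact conjSum_nonneg hB (sub_nonneg.2 h)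

lemma isSelfAdjoint_conjSum (hB : ∀ i, IsSelfAdjoint (B i)) (hS : IsSelfAdjoint S) :
    IsSelfAdjoint (conjSum B S) := by
  rw [conjSum_apply]
  exact isSelfAdjoint_sum _ fun i _ => hS.conjugate_self (hB i)

lemma dotProduct_conjSum_mul_self_mulVec (hB : ∀ i, IsSelfAdjoint (B i)) (hT : IsSelfAdjoint T)
    (w : J → ℝ) :
    w ⬝ᵥ conjSum B (T * T) *ᵥ w = ∑ i, ((T * B i) *ᵥ w) ⬝ᵥ ((T * B i) *ᵥ w) := by
  rw [conjSum_apply, sum_mulVec, dotProduct_sum]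
  refine Finset.sum_congr rfl fun i _ => ?_
  have hadj : (T * B i)ᵀ = B i * T := by
    rw [transpose_mul, show (B i)ᵀ = B i from hB i, show Tᵀ = T from hT]
  rw [show B i * (T * T) * B i = (B i * T) * (T * B i) by simp only [Matrix.mul_assoc], ← hadj,
    ← mulVec_mulVec, dotProduct_mulVec, vecMul_transpose]

lemma IsBessel.sum_dotProduct_self_le (hy : IsBessel y) (q : κ → J → ℝ) :
    ∑ j, (∑ k, y j k • q k) ⬝ᵥ (∑ k, y j k • q k) ≤ ∑ k, q k ⬝ᵥ q k := by
  simp only [dotProduct_self_eq_sum_sq, Finset.sum_apply, Pi.smul_apply, smul_eq_mul]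
  rw [Finset.sum_comm, Finset.sum_comm (s := (Finset.univ : Finset κ))]
  refine Finset.sum_le_sum fun a _ => (hy fun k => q k a).trans_eq ?_
  exact dotProduct_self_eq_sum_sq _

lemma IsBessel.conjSum_linearCombination_le (hy : IsBessel y) (hB : ∀ i, IsSelfAdjoint (B i))
    (hT : IsSelfAdjoint T) :
    conjSum (fun j => linearCombination ℝ B (y j)) (T * T) ≤ conjSum B (T * T) := by
  have hL (j : ν) : IsSelfAdjoint (linearCombination ℝ B (y j)) :=
    isSelfAdjoint_linearCombination hB _
  have hTT : IsSelfAdjoint (T * T) := hT.mul_self_nonneg.isSelfAdjoint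
  refine le_of_dotProduct_mulVec_le (isSelfAdjoint_conjSum hL hTT) (isSelfAdjoint_conjSum hB hTT)
    fun w => ?_
  rw [dotProduct_conjSum_mul_self_mulVec hB hT, dotProduct_conjSum_mul_self_mulVec hL hT]
  refine le_of_eq_of_le ?_ (hy.sum_dotProduct_self_le fun k => (T * B k) *ᵥ w)
  simp only [Fintype.linearCombination_apply, Finset.mul_sum, mul_smul_comm, sum_mulVec,
    smul_mulVec]

lemma crossing_linearCombination (B : κ → Matrix J J ℝ) (S : Matrix J J ℝ) (c : κ → ℝ)
    (ξ : κ → J → ℝ) :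
    crossing B S (linearCombination ℝ B c) ξ = ∑ k, c k • crossing B S (B k) ξ := by
  simp only [crossing, Fintype.linearCombination_apply, Finset.mul_sum, mul_smul_comm, sum_mulVec,
    smul_mulVec, Finset.smul_sum]
  exact Finset.sum_comm

lemma familyMatrix_mulVec_dotProduct_self (B : κ → Matrix J J ℝ) (c : κ → ℝ) :
    (familyMatrix B *ᵥ c) ⬝ᵥ (familyMatrix B *ᵥ c) = frobNormSq (linearCombination ℝ B c) := by
  rw [dotProduct_self_eq_sum_sq, Fintype.sum_prod_type]
  simp only [frobNormSq, Fintype.linearCombination_apply, Matrix.sum_apply, Matrix.smul_apply,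
    smul_eq_mul, mulVec, dotProduct, familyMatrix, of_apply, mul_comm]

lemma sum_sum_mul_sq_le_of_frobNormSq_le {v : ℝ} (hv : 0 ≤ v)
    (h : ∀ c : κ → ℝ, frobNormSq (linearCombination ℝ B c) ≤ v * (c ⬝ᵥ c)) (Q : Matrix J J ℝ) :
    ∑ k, (∑ a, ∑ e, Q a e * B k a e) ^ 2 ≤ v * frobNormSq Q := by
  have := vecMul_dotProduct_self_le hv
    (fun c => (familyMatrix_mulVec_dotProduct_self B c).trans_le (h c)) fun p => Q p.1 p.2
  rw [dotProduct_self_eq_sum_sq, dotProduct_self_eq_sum_sq, Fintype.sum_prod_type] at this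
  simpa only [vecMul, dotProduct, Fintype.sum_prod_type, familyMatrix, of_apply, frobNormSq]
    using this

lemma crossing_apply_eq_sum (hB : ∀ i, IsSelfAdjoint (B i)) (hS : IsSelfAdjoint S)
    (L : Matrix J J ℝ) (ξ : κ → J → ℝ) (a : J) :
    crossing B S L ξ a =
      ∑ f, ∑ l, (S * linearCombination ℝ B fun i => ξ i l) f a * L f l := by
  have hswap (i : κ) (f : J) : (B i * S) a f = (S * B i) f a := by
    have : star (S * B i) = B i * S := by rw [star_mul, hS.star_eq, (hB i).star_eq]
    rw [← this, star_apply, star_trivial]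
  simp only [crossing, Finset.sum_apply, ← mulVec_mulVec _ (_ * S), mulVec, dotProduct, hswap,
    Fintype.linearCombination_apply, Finset.mul_sum, mul_smul_comm, Matrix.sum_apply,
    Matrix.smul_apply, smul_eq_mul, Finset.sum_mul]
  rw [Finset.sum_comm]
  refine Finset.sum_congr rfl fun f _ => ?_
  rw [Finset.sum_comm]
  exact Finset.sum_congr rfl fun l _ => Finset.sum_congr rfl fun i _ => by ring

variable [DecidableEq J] {b : ℝ}

lemma CrossingBound.sum_linearCombination_le (hb : CrossingBound B b) (hy : IsBessel y) {s : ℝ}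
    (hS : S ∈ Set.Icc (-(s • (1 : Matrix J J ℝ))) (s • 1)) (ξ : κ → J → ℝ) :
    ∑ j, crossing B S (linearCombination ℝ B (y j)) ξ ⬝ᵥ
      crossing B S (linearCombination ℝ B (y j)) ξ ≤ (b * s) ^ 2 * ∑ i, ξ i ⬝ᵥ ξ i := by
  simp only [crossing_linearCombination]
  exact (hy.sum_dotProduct_self_le _).trans (hb hS ξ)

lemma sum_mulVec_dotProduct_self_le (hB : ∀ i, IsSelfAdjoint (B i)) {m : ℝ}
    (h : conjSum B 1 ≤ m • 1) (x : J → ℝ) :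
    ∑ i, (B i *ᵥ x) ⬝ᵥ (B i *ᵥ x) ≤ m * (x ⬝ᵥ x) := by
  have hform := dotProduct_conjSum_mul_self_mulVec hB (.one _) x
  simp only [Matrix.one_mul] at hform
  rw [← hform, ← dotProduct_smul_one_mulVec]
  exact dotProduct_mulVec_mono h x

lemma dotProduct_self_sum_mulVec_le (hB : ∀ i, IsSelfAdjoint (B i)) {m : ℝ} (hm : 0 ≤ m)
    (h : conjSum B 1 ≤ m • 1) (q : κ → J → ℝ) :
    (∑ i, B i *ᵥ q i) ⬝ᵥ (∑ i, B i *ᵥ q i) ≤ m * ∑ i, q i ⬝ᵥ q i := by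
  let M : Matrix (κ × J) J ℝ := of fun p => B p.1 p.2
  have hM (x : J → ℝ) : (M *ᵥ x) ⬝ᵥ (M *ᵥ x) = ∑ i, (B i *ᵥ x) ⬝ᵥ (B i *ᵥ x) :=
    Fintype.sum_prod_type _
  have hq : (fun p : κ × J => q p.1 p.2) ᵥ* M = ∑ i, B i *ᵥ q i := by
    ext a
    simp only [vecMul, dotProduct, Fintype.sum_prod_type, M, of_apply, Finset.sum_apply, mulVec]
    refine Finset.sum_congr rfl fun i _ => Finset.sum_congr rfl fun c _ => ?_
    rw [mul_comm, ← IsHermitian.apply (hB i) a c, star_trivial]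
  have := vecMul_dotProduct_self_le hm
    (fun x => (hM x).trans_le (sum_mulVec_dotProduct_self_le hB h x)) fun p => q p.1 p.2
  rw [hq] at this
  exact this.trans_eq (congrArg (m * ·) (Fintype.sum_prod_type _))

lemma crossingBound_of_conjSum_one_le (hB : ∀ i, IsSelfAdjoint (B i)) {m : ℝ} (hm : 0 ≤ m)
    (h : conjSum B 1 ≤ m • 1) : CrossingBound B m := by
  intro S s hS ξ
  calc ∑ k, crossing B S (B k) ξ ⬝ᵥ crossing B S (B k) ξ
      ≤ ∑ k, m * ∑ i, (S *ᵥ B k *ᵥ ξ i) ⬝ᵥ (S *ᵥ B k *ᵥ ξ i) := by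
        refine Finset.sum_le_sum fun k _ => ?_
        simpa only [crossing, ← mulVec_mulVec] using
          dotProduct_self_sum_mulVec_le hB hm h fun i => S *ᵥ B k *ᵥ ξ i
    _ ≤ ∑ k, m * ∑ i, s ^ 2 * ((B k *ᵥ ξ i) ⬝ᵥ (B k *ᵥ ξ i)) := by
        gcongr with k _ i _
        exact mulVec_dotProduct_self_le hS _
    _ = m * s ^ 2 * ∑ i, ∑ k, (B k *ᵥ ξ i) ⬝ᵥ (B k *ᵥ ξ i) := by
        rw [Finset.sum_comm (s := (Finset.univ : Finset κ))]
        simp only [Finset.mul_sum, mul_assoc]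
    _ ≤ m * s ^ 2 * ∑ i, m * (ξ i ⬝ᵥ ξ i) := by
        gcongr with i _
        exact sum_mulVec_dotProduct_self_le hB h _
    _ = (m * s) ^ 2 * ∑ i, ξ i ⬝ᵥ ξ i := by rw [← Finset.mul_sum]; ring

lemma crossingBound_of_frobNormSq_le (hB : ∀ i, IsSelfAdjoint (B i)) {v : ℝ} (hv : 0 ≤ v)
    (h : ∀ c : κ → ℝ, frobNormSq (linearCombination ℝ B c) ≤ v * (c ⬝ᵥ c)) :
    CrossingBound B v := by
  intro S s hS ξ
  set X : J → Matrix J J ℝ := fun l => linearCombination ℝ B fun i => ξ i l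
  calc ∑ k, crossing B S (B k) ξ ⬝ᵥ crossing B S (B k) ξ
      = ∑ a, ∑ k, (∑ f, ∑ l, (S * X l) f a * B k f l) ^ 2 := by
        simp only [dotProduct_self_eq_sum_sq, crossing_apply_eq_sum hB
          (isSelfAdjoint_of_mem_Icc hS), X]
        exact Finset.sum_comm
    _ ≤ ∑ a, v * frobNormSq (of fun f l => (S * X l) f a) :=
        Finset.sum_le_sum fun a _ =>
          sum_sum_mul_sq_le_of_frobNormSq_le hv h (of fun f l => (S * X l) f a)
    _ = v * ∑ l, frobNormSq (S * X l) := by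
        simp only [frobNormSq, of_apply, ← Finset.mul_sum]
        rw [Finset.sum_comm_cycle, Finset.sum_congr rfl fun l _ => Finset.sum_comm]
    _ ≤ v * ∑ l, s ^ 2 * (v * ((fun i => ξ i l) ⬝ᵥ fun i => ξ i l)) := by
        gcongr with l _
        exact (frobNormSq_mul_le (mulVec_dotProduct_self_le hS) _).trans
          (mul_le_mul_of_nonneg_left (h _) (sq_nonneg s))
    _ = (v * s) ^ 2 * ∑ i, ξ i ⬝ᵥ ξ i := by
        simp only [dotProduct, ← Finset.mul_sum]
        rw [Finset.sum_comm]
        ring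

end MatrixSeries

/-! ### Averaged growth of the potential -/

section Averaging

variable {ν : Type*} [Fintype ν]

lemma frequently_exists_le_of_sum_neg {F : ν → ℝ → ℝ} {a : ℝ} {b c : ν → ℝ}
    (hF : ∀ j, HasJet (F j) a (b j) (c j)) (hc : ∑ j, c j < 0) :
    ∃ᶠ e in 𝓝[≠] (0 : ℝ), ∃ j, F j e ≤ a := by
  choose h hcont hzero heq using hF
  have hneg : Tendsto (fun e : ℝ => -e) (𝓝 0) (𝓝 0) := by
    simpa only [neg_zero] using (continuous_neg (G := ℝ)).tendsto 0
  have hsum : ∀ᶠ e in 𝓝 (0 : ℝ), ∑ j, (h j e + h j (-e)) < 0 := by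
    have hlim : Tendsto (fun e => ∑ j, (h j e + h j (-e))) (𝓝 0) (𝓝 (∑ j, (c j + c j))) :=
      tendsto_finsetSum _ fun j _ => by
        have hj : Tendsto (h j) (𝓝 0) (𝓝 (c j)) := hzero j ▸ hcont j
        exact hj.add (hj.comp hneg)
    refine hlim.eventually_lt_const ?_
    rw [Finset.sum_add_distrib]
    linarith
  intro hcon
  simp only [not_exists, not_le, eventually_nhdsWithin_iff] at hcon
  have hexp := eventually_all.2 heq
  obtain ⟨e, ⟨⟨⟨⟨hexp, hexp'⟩, hlt⟩, hbig⟩, hbig'⟩, he : e ≠ 0⟩ :=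
    (((((hexp.and (hneg.eventually hexp)).and hsum).and hcon).and
      (hneg.eventually hcon)).filter_mono nhdsWithin_le_nhds |>.and
        (self_mem_nhdsWithin (s := {(0 : ℝ)}ᶜ))).exists
  refine hlt.not_ge (Finset.sum_nonneg fun j _ => ?_)
  have hj := hbig he j
  have hj' := hbig' (neg_ne_zero.2 he) j
  rw [hexp j] at hj
  rw [hexp' j] at hj'
  simp only [smul_eq_mul, neg_sq] at hj hj'
  exact (pos_of_mul_pos_right (a := e ^ 2) (by linarith) (sq_nonneg e)).le

variable {J : Type*} [Fintype J] [DecidableEq J]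

lemma sum_trace_powCoeff₂_le {K G : Matrix J J ℝ} {L N : ν → Matrix J J ℝ} {s t : ℝ}
    (hK : 0 ≤ K) (hL : ∀ j, IsSelfAdjoint (L j)) (P : ℕ) (hs : 0 ≤ s)
    (hN : ∑ j, N j ≤ -(s • G)) (hLL : ∑ j, L j * L j ≤ t • G)
    (hKG : (1 / 4 : ℝ) • G ≤ K * G) :
    ∑ j, (powCoeff₂ K (L j) (N j) (P + 2)).trace ≤
      (P + 2) * ((P + 1) / 2 * t - s / 4) * (K ^ P * G).trace := by
  have hpow (q : ℕ) : 0 ≤ K ^ q := ((nonneg_iff_posSemidef.1 hK).pow q).nonneg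
  have hfirst := trace_mul_le_trace_mul (hpow (P + 1)) hN
  have hsecond := trace_mul_le_trace_mul (hpow P) hLL
  have hquarter := trace_mul_le_trace_mul (hpow P) hKG
  rw [← Matrix.mul_assoc, ← pow_succ] at hquarter
  simp only [mul_neg, mul_smul_comm, trace_neg, trace_smul, smul_eq_mul] at hfirst hsecond hquarter
  have hterm (j : ν) : (powCoeff₂ K (L j) (N j) (P + 2)).trace ≤
      (P + 2) * (K ^ (P + 1) * N j).trace +
        (P + 2) * (P + 1) / 2 * (K ^ P * (L j * L j)).trace := by
    simpa [Matrix.mul_assoc] using trace_powCoeff₂_mul_le (N := N j) hK (hL j) P 0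
  calc ∑ j, (powCoeff₂ K (L j) (N j) (P + 2)).trace
      ≤ ∑ j, ((P + 2) * (K ^ (P + 1) * N j).trace +
          (P + 2) * (P + 1) / 2 * (K ^ P * (L j * L j)).trace) :=
        Finset.sum_le_sum fun j _ => hterm j
    _ = (P + 2) * (K ^ (P + 1) * ∑ j, N j).trace +
          (P + 2) * (P + 1) / 2 * (K ^ P * ∑ j, L j * L j).trace := by
        simp only [trace_sum, Finset.sum_add_distrib, Finset.mul_sum]
    _ ≤ (P + 2) * -(s * (1 / 4 * (K ^ P * G).trace)) +
          (P + 2) * (P + 1) / 2 * (t * (K ^ P * G).trace) := by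
        gcongr
        exact hfirst.trans (neg_le_neg (mul_le_mul_of_nonneg_left hquarter hs))
    _ = _ := by ring

lemma sum_trace_powCoeff₂_covariance_nonpos {H : Matrix J J ℝ} {L N : ν → Matrix J J ℝ} {t : ℝ}
    (hH : 0 ≤ H) (hL : ∀ j, IsSelfAdjoint (L j)) (P : ℕ) (hLL : ∑ j, L j * L j ≤ t • H)
    (hN : ∑ j, N j ≤ -((1 / 200 : ℝ) • H)) (ht : (P + 2) * t ≤ 1 / 40000) :
    ∑ j, (powCoeff₂ ((100 : ℝ) • H + (1 / 4 : ℝ) • 1) ((100 : ℝ) • L j) ((100 : ℝ) • N j)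
      (P + 2)).trace ≤ 0 := by
  set K := (100 : ℝ) • H + (1 / 4 : ℝ) • 1 with hK
  have hK0 : 0 ≤ K :=
    add_nonneg (smul_nonneg (by norm_num) hH) (smul_nonneg (by norm_num) zero_le_one)
  have hKH : (1 / 4 : ℝ) • H ≤ K * H := by
    have hHH : 0 ≤ (100 : ℝ) • (H * H) :=
      smul_nonneg (by norm_num) hH.isSelfAdjoint.mul_self_nonneg
    rw [hK, Matrix.add_mul, smul_mul_assoc, smul_mul_assoc, Matrix.one_mul]
    exact le_add_of_nonneg_left hHH
  have hLL' : ∑ j, ((100 : ℝ) • L j) * ((100 : ℝ) • L j) ≤ (10000 * t) • H := by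
    simp only [mul_smul_comm, smul_mul_assoc, smul_smul, ← Finset.smul_sum]
    rw [show (100 * 100 : ℝ) = 10000 by norm_num, mul_smul]
    exact smul_le_smul_of_nonneg_left hLL (by norm_num)
  have hN' : ∑ j, (100 : ℝ) • N j ≤ -((1 / 2 : ℝ) • H) := by
    rw [← Finset.smul_sum]
    exact (smul_le_smul_of_nonneg_left hN (by norm_num)).trans_eq (by module)
  refine (sum_trace_powCoeff₂_le hK0 (fun j => (IsSelfAdjoint.all _).smul (hL j)) P (by norm_num)
    hN' hLL' hKH).trans ?_
  refine mul_nonpos_of_nonpos_of_nonneg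
    (mul_nonpos_of_nonneg_of_nonpos (by positivity) ?_)
    (trace_mul_nonneg ((nonneg_iff_posSemidef.1 hK0).pow P).nonneg hH)
  rcases le_total t 0 with h | h
  · have : (P + 1 : ℝ) * t ≤ 0 := mul_nonpos_of_nonneg_of_nonpos (by positivity) h
    linarith
  · linarith

lemma sum_trace_powCoeff₂_inverse_neg [Nonempty J] {R : Matrix J J ℝ} {X Z : ν → Matrix J J ℝ}
    {σ ρ : ℝ} (hR : R.PosDef) (hX : ∀ j, IsSelfAdjoint (X j)) (hρ : 0 < ρ) (hσ : 0 < σ) (P : ℕ)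
    (hρσ : ρ * σ = P + 2) (hXX : ∑ j, X j * X j ≤ (1 / 100 : ℝ) • (R * R))
    (hZ : ∑ j, Z j = -(σ • (R * R))) :
    ∑ j, (powCoeff₂ (ρ⁻¹ • R + (1 / 4 : ℝ) • 1) (ρ⁻¹ • X j) (ρ⁻¹ • Z j) (P + 2)).trace < 0 := by
  set K := ρ⁻¹ • R + (1 / 4 : ℝ) • 1 with hK
  have hR0 : 0 ≤ R := hR.posSemidef.nonneg
  have hKdef : K.PosDef := hR.smul (inv_pos.2 hρ) |>.add (PosDef.one.smul (by norm_num))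
  have hKR : (1 / 4 : ℝ) • (R * R) ≤ K * (R * R) := by
    have hcube : 0 ≤ ρ⁻¹ • (R * R * R) :=
      smul_nonneg (inv_nonneg.2 hρ.le) (IsSelfAdjoint.conjugate_nonneg hR0 hR0.isSelfAdjoint)
    rw [hK, Matrix.add_mul, smul_mul_assoc, smul_mul_assoc, Matrix.one_mul, ← Matrix.mul_assoc]
    exact le_add_of_nonneg_left hcube
  have hXX' : ∑ j, (ρ⁻¹ • X j) * (ρ⁻¹ • X j) ≤ (ρ⁻¹ * ρ⁻¹ * (1 / 100)) • (R * R) := by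
    simp only [mul_smul_comm, smul_mul_assoc, smul_smul, ← Finset.smul_sum]
    rw [mul_smul _ (1 / 100 : ℝ)]
    exact smul_le_smul_of_nonneg_left hXX (mul_self_nonneg ρ⁻¹)
  have hZ' : ∑ j, ρ⁻¹ • Z j ≤ -((ρ⁻¹ * σ) • (R * R)) := by
    rw [← Finset.smul_sum, hZ, smul_neg, smul_smul]
  refine (sum_trace_powCoeff₂_le hKdef.posSemidef.nonneg
    (fun j => (IsSelfAdjoint.all _).smul (hX j)) P (by positivity) hZ' hXX' hKR).trans_lt ?_
  have htrace : 0 < (K ^ P * (R * R)).trace := by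
    have hpow : (K ^ P).PosDef :=
      (hKdef.posSemidef.pow P).posDef_iff_isUnit.2 (hKdef.isUnit.pow P)
    have hconj := hpow.conjTranspose_mul_mul_same (mulVec_injective_of_isUnit hR.isUnit)
    rw [hR.isHermitian.eq] at hconj
    rw [← Matrix.mul_assoc, trace_mul_comm, ← Matrix.mul_assoc]
    exact hconj.trace_pos
  have hcoeff : ((P + 1 : ℝ) / 2 * (ρ⁻¹ * ρ⁻¹ * (1 / 100)) - ρ⁻¹ * σ / 4) < 0 := by
    have hP : (P + 1 : ℝ) / 2 * (ρ⁻¹ * ρ⁻¹ * (1 / 100)) ≤ ρ⁻¹ * σ / 200 := by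
      have : (P + 1 : ℝ) ≤ ρ * σ := by linarith
      calc (P + 1 : ℝ) / 2 * (ρ⁻¹ * ρ⁻¹ * (1 / 100)) ≤ ρ * σ / 2 * (ρ⁻¹ * ρ⁻¹ * (1 / 100)) := by
            gcongr
        _ = ρ⁻¹ * σ / 200 := by field_simp; norm_num
    have : 0 < ρ⁻¹ * σ := by positivity
    linarith
  exact mul_neg_of_neg_of_pos (mul_neg_of_pos_of_neg (by positivity) hcoeff) htrace

end Averaging

section Step

lemma isSelfAdjoint_mul_add_mul {R : Type*} [NonUnitalSemiring R] [StarRing R] {a b : R}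
    (ha : IsSelfAdjoint a) (hb : IsSelfAdjoint b) : IsSelfAdjoint (a * b + b * a) := by
  rw [isSelfAdjoint_iff, star_add, star_mul, star_mul, ha.star_eq, hb.star_eq, add_comm]

variable {J κ ν : Type*} [Fintype J] [DecidableEq J] [Fintype κ] [Fintype ν]
  {B : κ → Matrix J J ℝ} {y : ν → κ → ℝ} {R Y : Matrix J J ℝ} {b ρ σ : ℝ}

lemma sum_crossing_sandwich_le (hb : CrossingBound B b) (hy : IsBessel y) {S T : Matrix J J ℝ}
    {s : ℝ} (hS : S ∈ Set.Icc (-(s • (1 : Matrix J J ℝ))) (s • 1)) (w : J → ℝ) :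
    ∑ j, (conjSum B (S * linearCombination ℝ B (y j) * T) *ᵥ w) ⬝ᵥ
        (conjSum B (S * linearCombination ℝ B (y j) * T) *ᵥ w) ≤
      (b * s) ^ 2 * ∑ i, ((T * B i) *ᵥ w) ⬝ᵥ ((T * B i) *ᵥ w) := by
  convert hb.sum_linearCombination_le hy hS fun i => (T * B i) *ᵥ w using 4 with j <;>
  · simp only [conjSum_apply, crossing, sum_mulVec, mulVec_mulVec, Matrix.mul_assoc]

lemma sum_sq_conjSum_le (hB : ∀ i, IsSelfAdjoint (B i)) (hb : CrossingBound B b) (hy : IsBessel y)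
    (hR : 0 ≤ R) (hρ : 0 ≤ ρ) (hRρ : R ≤ ρ • 1) {X : ν → Matrix J J ℝ}
    (hX : ∀ j, X j = R * linearCombination ℝ B (y j) * R) :
    ∑ j, conjSum B (R * X j + X j * R) * conjSum B (R * X j + X j * R) ≤
      (4 * b ^ 2 * ρ ^ 4) • conjSum B (R * R) := by
  have hRsa := hR.isSelfAdjoint
  have hmem : R ∈ Set.Icc (-(ρ • (1 : Matrix J J ℝ))) (ρ • 1) :=
    ⟨(neg_nonpos.2 (smul_nonneg hρ zero_le_one)).trans hR, hRρ⟩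
  have hmem2 : R * R ∈ Set.Icc (-(ρ ^ 2 • (1 : Matrix J J ℝ))) (ρ ^ 2 • 1) :=
    ⟨(neg_nonpos.2 (smul_nonneg (sq_nonneg ρ) zero_le_one)).trans hRsa.mul_self_nonneg,
      mul_self_le_sq_smul_one hmem⟩
  have hXsa (j : ν) : IsSelfAdjoint (X j) := by
    rw [hX]
    exact (isSelfAdjoint_linearCombination hB _).conjugate_self hRsa
  have hsa (j : ν) : IsSelfAdjoint (conjSum B (R * X j + X j * R)) :=
    isSelfAdjoint_conjSum hB (isSelfAdjoint_mul_add_mul hRsa (hXsa j))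
  refine le_of_dotProduct_mulVec_le
    (isSelfAdjoint_sum _ fun j _ => (hsa j).mul_self_nonneg.isSelfAdjoint)
    ((IsSelfAdjoint.all _).smul (isSelfAdjoint_conjSum hB hRsa.mul_self_nonneg.isSelfAdjoint))
    fun w => ?_
  have hleft := sum_crossing_sandwich_le (T := R) hb hy hmem2 w
  have hright := sum_crossing_sandwich_le (T := R * R) hb hy hmem w
  have hRR : ∑ i, ((R * R * B i) *ᵥ w) ⬝ᵥ ((R * R * B i) *ᵥ w) ≤
      ρ ^ 2 * ∑ i, ((R * B i) *ᵥ w) ⬝ᵥ ((R * B i) *ᵥ w) := by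
    rw [Finset.mul_sum]
    refine Finset.sum_le_sum fun i _ => ?_
    rw [Matrix.mul_assoc, ← mulVec_mulVec]
    exact mulVec_dotProduct_self_le hmem _
  have hsplit (j : ν) : conjSum B (R * X j + X j * R) *ᵥ w =
      conjSum B (R * R * linearCombination ℝ B (y j) * R) *ᵥ w +
        conjSum B (R * linearCombination ℝ B (y j) * (R * R)) *ᵥ w := by
    rw [hX, map_add, add_mulVec]
    simp only [Matrix.mul_assoc]
  rw [sum_mulVec, dotProduct_sum, smul_mulVec, dotProduct_smul, smul_eq_mul,
    dotProduct_conjSum_mul_self_mulVec hB hRsa]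
  simp only [dotProduct_mul_self_mulVec (hsa _), hsplit]
  refine (Finset.sum_le_sum fun j _ => add_dotProduct_self_le _ _).trans ?_
  rw [Finset.sum_add_distrib, ← Finset.mul_sum, ← Finset.mul_sum]
  linarith [mul_le_mul_of_nonneg_left hRR (sq_nonneg (b * ρ))]

lemma sum_conjSum_mul_le {X Z : ν → Matrix J J ℝ} (hB : ∀ i, IsSelfAdjoint (B i)) (hσ : 0 < σ)
    (hR : IsSelfAdjoint R) (hcap : (112 * σ)⁻¹ • 1 ≤ R)
    (hXX : ∑ j, X j * X j ≤ (1 / 100 : ℝ) • (R * R)) (hZ : ∑ j, Z j = -(σ • (R * R))) :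
    ∑ j, conjSum B (R * Z j + X j * X j + Z j * R) ≤ -((1 / 200 : ℝ) • conjSum B (R * R)) := by
  have hRR : 0 ≤ R * R := hR.mul_self_nonneg
  have hcube : (112 * σ)⁻¹ • (R * R) ≤ R * R * R := by
    simpa only [mul_smul_comm, smul_mul_assoc, Matrix.mul_one] using
      hR.conjugate_le_conjugate hcap
  have hsum : ∑ j, (R * Z j + X j * X j + Z j * R) =
      ∑ j, X j * X j - (2 * σ) • (R * R * R) := by
    simp only [Finset.sum_add_distrib, ← Finset.mul_sum, ← Finset.sum_mul, hZ, mul_neg, neg_mul,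
      mul_smul_comm, smul_mul_assoc, Matrix.mul_assoc]
    module
  rw [← map_sum, ← map_smul, ← map_neg, hsum]
  refine conjSum_mono hB ?_
  calc ∑ j, X j * X j - (2 * σ) • (R * R * R)
      ≤ (1 / 100 : ℝ) • (R * R) - (2 * σ) • (112 * σ)⁻¹ • (R * R) :=
        sub_le_sub hXX (smul_le_smul_of_nonneg_left hcube (by positivity))
    _ = -((1 / 200 : ℝ) • (R * R)) - (1 / 56 - 1 / 100 - 1 / 200 : ℝ) • (R * R) := by
        rw [smul_smul, show 2 * σ * (112 * σ)⁻¹ = 1 / 56 by field_simp; norm_num]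
        module
    _ ≤ -((1 / 200 : ℝ) • (R * R)) := sub_le_self _ (smul_nonneg (by norm_num) hRR)

/-- The potential controlling a barrier `Y`: the first trace penalises the size of
`conjSum B (Y⁻¹ ^ 2)`, the second one the size of `Y⁻¹` itself. -/
noncomputable def potential (B : κ → Matrix J J ℝ) (r : ℝ) (p : ℕ) (Y : Matrix J J ℝ) : ℝ :=
  (((100 : ℝ) • conjSum B (Y⁻¹ * Y⁻¹) + (1 / 4 : ℝ) • 1) ^ p).trace +
    ((r • Y⁻¹ + (1 / 4 : ℝ) • 1) ^ p).trace

/-- The drift added to the barrier `Y`, per squared step length, when moving along one of the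
directions `A j`: it cancels the average second-order growth of `Y⁻¹` and lowers it by a further
multiple of `σ`. -/
noncomputable def drift (A : ν → Matrix J J ℝ) (σ : ℝ) (Y : Matrix J J ℝ) : Matrix J J ℝ :=
  (Fintype.card ν : ℝ)⁻¹ • (conjSum A Y⁻¹ + σ • 1)

lemma sum_inverse_second_coeff [Nonempty ν] (A : ν → Matrix J J ℝ) (σ : ℝ) (Y : Matrix J J ℝ) :
    ∑ j, (Y⁻¹ * A j * Y⁻¹ * A j * Y⁻¹ - Y⁻¹ * drift A σ Y * Y⁻¹) = -(σ • (Y⁻¹ * Y⁻¹)) := by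
  have hcard : (Fintype.card ν : ℝ) ≠ 0 := by exact_mod_cast Fintype.card_ne_zero
  have hdrift : ∑ _j : ν, Y⁻¹ * drift A σ Y * Y⁻¹ = Y⁻¹ * (conjSum A Y⁻¹ + σ • 1) * Y⁻¹ := by
    rw [Finset.sum_const, Finset.card_univ, ← Nat.cast_smul_eq_nsmul ℝ, drift, mul_smul_comm,
      smul_mul_assoc, smul_inv_smul₀ hcard]
  rw [Finset.sum_sub_distrib, hdrift, conjSum_apply]
  simp only [Matrix.mul_add, Matrix.add_mul, Finset.mul_sum, Finset.sum_mul, Matrix.mul_assoc,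
    mul_smul_comm, smul_mul_assoc, Matrix.one_mul]
  abel

lemma hasJet_potential (B : κ → Matrix J J ℝ) (r : ℝ) (p : ℕ) (hY : IsUnit Y.det)
    (A D : Matrix J J ℝ) {X Z : Matrix J J ℝ} (hX : X = -(Y⁻¹ * A * Y⁻¹))
    (hZ : Z = Y⁻¹ * A * Y⁻¹ * A * Y⁻¹ - Y⁻¹ * D * Y⁻¹) :
    HasJet (fun e : ℝ => potential B r p (Y + e • A + e ^ 2 • D)) (potential B r p Y)
      ((powCoeff₁ ((100 : ℝ) • conjSum B (Y⁻¹ * Y⁻¹) + (1 / 4 : ℝ) • 1)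
          ((100 : ℝ) • conjSum B (Y⁻¹ * X + X * Y⁻¹)) p).trace +
        (powCoeff₁ (r • Y⁻¹ + (1 / 4 : ℝ) • 1) (r • X) p).trace)
      ((powCoeff₂ ((100 : ℝ) • conjSum B (Y⁻¹ * Y⁻¹) + (1 / 4 : ℝ) • 1)
          ((100 : ℝ) • conjSum B (Y⁻¹ * X + X * Y⁻¹))
          ((100 : ℝ) • conjSum B (Y⁻¹ * Z + X * X + Z * Y⁻¹)) p).trace +
        (powCoeff₂ (r • Y⁻¹ + (1 / 4 : ℝ) • 1) (r • X) (r • Z) p).trace) := by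
  have hinv := (hasJet_quadratic Y A D).inv hY
  rw [← hX, ← hZ] at hinv
  have hcov := ((hinv.mul hinv).map ((100 : ℝ) • conjSum B) (by fun_prop)).add
    (hasJet_const ((1 / 4 : ℝ) • 1))
  have hres := (hinv.map (r • LinearMap.id) (by fun_prop)).add (hasJet_const ((1 / 4 : ℝ) • 1))
  have htrace := ((hcov.pow p).map (traceLinearMap J ℝ ℝ) (by fun_prop)).add
    ((hres.pow p).map (traceLinearMap J ℝ ℝ) (by fun_prop))
  simpa only [add_zero, potential, LinearMap.smul_apply, LinearMap.id_apply,
    traceLinearMap_apply] using htrace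

lemma frequently_exists_potential_le [Nonempty J] [Nonempty ν] (hB : ∀ i, IsSelfAdjoint (B i))
    (hb : CrossingBound B b) (hy : IsBessel y) (hY : Y.PosDef) (hρ : 0 < ρ) (hσ : 0 < σ) {P : ℕ}
    (hρσ : ρ * σ = P + 2) (hbρ : (P + 2) * b ^ 2 * ρ ^ 4 ≤ 1 / 160000) (hYρ : Y⁻¹ ≤ ρ • 1)
    (hcap : (112 * σ)⁻¹ • 1 ≤ Y⁻¹) (hcov : conjSum B (Y⁻¹ * Y⁻¹) ≤ (1 / 100 : ℝ) • 1)
    {A : ν → Matrix J J ℝ} (hA : ∀ j, A j = linearCombination ℝ B (y j)) :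
    ∃ᶠ e in 𝓝[≠] (0 : ℝ), ∃ j,
      potential B ρ⁻¹ (P + 2) (Y + e • A j + e ^ 2 • drift A σ Y) ≤
        potential B ρ⁻¹ (P + 2) Y := by
  have hR : Y⁻¹.PosDef := hY.inv
  have hR0 : 0 ≤ Y⁻¹ := hR.posSemidef.nonneg
  have hRsa : IsSelfAdjoint Y⁻¹ := hR0.isSelfAdjoint
  set X : ν → Matrix J J ℝ := fun j => -(Y⁻¹ * A j * Y⁻¹) with hX
  set Z : ν → Matrix J J ℝ := fun j =>
    Y⁻¹ * A j * Y⁻¹ * A j * Y⁻¹ - Y⁻¹ * drift A σ Y * Y⁻¹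
  have hXneg (j : ν) : X j = Y⁻¹ * linearCombination ℝ B (-y j) * Y⁻¹ := by
    simp only [hX, hA, map_neg, mul_neg, neg_mul]
  have hXsa (j : ν) : IsSelfAdjoint (X j) := by
    rw [hXneg]
    exact (isSelfAdjoint_linearCombination hB _).conjugate_self hRsa
  have hXX : ∑ j, X j * X j ≤ (1 / 100 : ℝ) • (Y⁻¹ * Y⁻¹) := by
    have hbessel := hRsa.conjugate_le_conjugate
      ((hy.conjSum_linearCombination_le hB hRsa).trans hcov)
    simpa only [conjSum_apply, hX, hA, mul_neg, neg_mul, neg_neg, Finset.mul_sum, Finset.sum_mul,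
      Matrix.mul_assoc, mul_smul_comm, smul_mul_assoc, Matrix.one_mul] using hbessel
  have hZsum : ∑ j, Z j = -(σ • (Y⁻¹ * Y⁻¹)) := sum_inverse_second_coeff A σ Y
  have hyneg : IsBessel fun j => -y j := fun q => by simpa only [neg_dotProduct, neg_sq] using hy q
  have hcovSum := sum_trace_powCoeff₂_covariance_nonpos
    (conjSum_nonneg hB hRsa.mul_self_nonneg)
    (fun j => isSelfAdjoint_conjSum hB (isSelfAdjoint_mul_add_mul hRsa (hXsa j)))
    P (sum_sq_conjSum_le hB hb hyneg hR0 hρ.le hYρ hXneg)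
    (sum_conjSum_mul_le hB hσ hRsa hcap hXX hZsum) (by linarith)
  have hresSum := sum_trace_powCoeff₂_inverse_neg hR hXsa hρ hσ P hρσ hXX hZsum
  refine frequently_exists_le_of_sum_neg (fun j => hasJet_potential B ρ⁻¹ (P + 2)
    ((isUnit_iff_isUnit_det Y).1 hY.isUnit) (A j) (drift A σ Y) (X := X j) (Z := Z j) rfl rfl) ?_
  rw [Finset.sum_add_distrib]
  linarith

end Step

/-! ### Maximal feasible moves -/

section LoewnerTopology

variable {J : Type*} [Finite J]

instance : OrderClosedTopology (Matrix J J ℝ) where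
  isClosed_le' := by
    cases nonempty_fintype J
    simp only [le_iff, posSemidef_iff_dotProduct_mulVec, Set.ofPred_and, Set.ofPred_forall]
    refine IsClosed.inter (isClosed_eq ?_ ?_)
      (isClosed_iInter fun w => isClosed_le continuous_const ?_) <;> fun_prop

variable [DecidableEq J] {X Y D : Matrix J J ℝ} {c : ℝ}

lemma isCompact_Icc_smul_one (c : ℝ) :
    IsCompact (Set.Icc (-(c • (1 : Matrix J J ℝ))) (c • 1)) := by
  cases nonempty_fintype J
  let box : Set (Matrix J J ℝ) := Set.univ.pi fun _ => Set.univ.pi fun _ => Set.Icc (-|c|) |c|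
  have hbox : IsCompact box :=
    isCompact_univ_pi fun _ => isCompact_univ_pi fun _ => isCompact_Icc
  refine hbox.of_isClosed_subset isClosed_Icc fun X hX a _ b _ => abs_le.1 (sq_le_sq.1 ?_)
  have hcol := mulVec_dotProduct_self_le hX (Pi.single b 1)
  rw [mulVec_single_one, single_one_dotProduct, Pi.single_eq_same, mul_one] at hcol
  refine le_trans ?_ hcol
  rw [sq]
  exact Finset.single_le_sum (f := fun a => X a b * X a b) (fun _ _ => mul_self_nonneg _)
    (Finset.mem_univ a)

lemma exists_mem_Icc_smul_one (hX : IsSelfAdjoint X) :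
    ∃ c : ℝ, X ∈ Set.Icc (-(c • (1 : Matrix J J ℝ))) (c • 1) := by
  cases nonempty_fintype J
  have hsq : X * X ≤ (X * X).trace • 1 := le_trace_smul_one hX.mul_self_nonneg
  have hsub := (hX.sub (.one _)).mul_self_nonneg
  have hadd := (hX.add (.one _)).mul_self_nonneg
  refine ⟨((X * X).trace + 1) / 2, ?_, ?_⟩ <;> rw [← sub_nonneg]
  · convert! smul_nonneg (by norm_num : (0 : ℝ) ≤ 1 / 2) (add_nonneg hadd (sub_nonneg.2 hsq))
      using 1
    simp only [mul_add, add_mul, mul_one, one_mul]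
    module
  · convert! smul_nonneg (by norm_num : (0 : ℝ) ≤ 1 / 2) (add_nonneg hsub (sub_nonneg.2 hsq))
      using 1
    simp only [mul_sub, sub_mul, mul_one, one_mul]
    module

lemma eventually_posDef_add_smul (hc : 0 < c) (hY : c • 1 ≤ Y) (hX : IsSelfAdjoint X)
    (hD : 0 ≤ D) : ∀ᶠ e in 𝓝 (0 : ℝ), (Y + e • X + e ^ 2 • D).PosDef := by
  cases nonempty_fintype J
  obtain ⟨k, hk⟩ := exists_mem_Icc_smul_one hX
  have hlt : ∀ᶠ e in 𝓝 (0 : ℝ), |e| * k < c :=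
    (by fun_prop : ContinuousAt (fun e : ℝ => |e| * k) 0).eventually_lt continuousAt_const
      (by simpa using hc)
  filter_upwards [hlt] with e he
  have hX' : -((|e| * k) • (1 : Matrix J J ℝ)) ≤ e • X := by
    rcases le_total 0 e with h | h
    · simpa only [abs_of_nonneg h, smul_neg, smul_smul] using smul_le_smul_of_nonneg_left hk.1 h
    · simpa only [abs_of_nonpos h, neg_smul, neg_mul, neg_neg, smul_smul] using
        neg_le_neg (smul_le_smul_of_nonneg_left hk.2 (neg_nonneg.2 h))
  refine posDef_of_smul_one_le (sub_pos.2 he) ?_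
  rw [sub_smul, sub_eq_add_neg]
  exact (add_le_add hY hX').trans (le_add_of_nonneg_right (smul_nonneg (sq_nonneg e) hD))

end LoewnerTopology

section PotentialBounds

variable {J κ : Type*} [Fintype J] [DecidableEq J] [Fintype κ]
  {B : κ → Matrix J J ℝ} {Y : Matrix J J ℝ} {r ρ : ℝ} {p : ℕ}

lemma continuousAt_potential (B : κ → Matrix J J ℝ) (r : ℝ) (p : ℕ) (hY : Y.PosDef) :
    ContinuousAt (potential B r p) Y := by
  have hinv : ContinuousAt (Inv.inv : Matrix J J ℝ → Matrix J J ℝ) Y :=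
    continuousAt_matrix_inv Y (by
      simpa only [Ring.inverse_eq_inv'] using continuousAt_inv₀ hY.det_pos.ne')
  have hcont : Continuous fun R : Matrix J J ℝ =>
      (((100 : ℝ) • conjSum B (R * R) + (1 / 4 : ℝ) • 1) ^ p).trace +
        ((r • R + (1 / 4 : ℝ) • 1) ^ p).trace := by
    have := continuous_conjSum B
    fun_prop
  exact hcont.continuousAt.comp hinv

lemma conjSum_inv_mul_inv_and_inv_le_of_potential_le (hB : ∀ i, IsSelfAdjoint (B i))
    (hY : Y.PosDef) (hρ : 0 < ρ) (hp : p ≠ 0) (h : potential B ρ⁻¹ p Y ≤ 1) :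
    conjSum B (Y⁻¹ * Y⁻¹) ≤ (1 / 100 : ℝ) • 1 ∧ Y⁻¹ ≤ ρ • 1 := by
  have hquarter : 0 ≤ (1 / 4 : ℝ) • (1 : Matrix J J ℝ) := smul_nonneg (by norm_num) zero_le_one
  have hcov : 0 ≤ (100 : ℝ) • conjSum B (Y⁻¹ * Y⁻¹) + (1 / 4 : ℝ) • 1 := add_nonneg
    (smul_nonneg (by norm_num) (conjSum_nonneg hB hY.inv.isHermitian.isSelfAdjoint.mul_self_nonneg))
    hquarter
  have hres : 0 ≤ ρ⁻¹ • Y⁻¹ + (1 / 4 : ℝ) • 1 :=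
    add_nonneg (smul_nonneg (inv_nonneg.2 hρ.le) hY.inv.posSemidef.nonneg) hquarter
  have hcovTrace := ((nonneg_iff_posSemidef.1 hcov).pow p).trace_nonneg
  have hresTrace := ((nonneg_iff_posSemidef.1 hres).pow p).trace_nonneg
  rw [potential] at h
  constructor
  · have := (le_add_of_nonneg_right hquarter).trans
      (le_one_of_trace_pow_le_one hp hcov (by linarith))
    simpa only [smul_smul, one_div, inv_mul_cancel₀ (by norm_num : (100 : ℝ) ≠ 0), one_smul] using
      smul_le_smul_of_nonneg_left this (by norm_num : (0 : ℝ) ≤ 1 / 100)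
  · have := (le_add_of_nonneg_right hquarter).trans
      (le_one_of_trace_pow_le_one hp hres (by linarith))
    simpa only [smul_inv_smul₀ hρ.ne'] using smul_le_smul_of_nonneg_left this hρ.le

lemma potential_smul_one_le {σ : ℝ} (hB : ∀ i, IsSelfAdjoint (B i)) (hσ : 0 < σ)
    (hρσ : 2 ≤ ρ * σ) (hB1 : conjSum B 1 ≤ σ ^ 2 • 1) (hcard : 2 * Fintype.card J ≤ 2 ^ p) :
    potential B ρ⁻¹ p ((20 * σ) • 1) ≤ 1 := by
  have hρ : 0 < ρ := pos_of_mul_pos_left (by linarith) hσ.le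
  have hinv : ((20 * σ) • (1 : Matrix J J ℝ))⁻¹ = (20 * σ)⁻¹ • 1 :=
    Matrix.inv_eq_right_inv (by
      rw [smul_mul_assoc, one_mul, smul_inv_smul₀ (by positivity)])
  have htrace {K : Matrix J J ℝ} (hK : 0 ≤ K) (h : K ≤ (1 / 4 : ℝ) • 1) :
      ((K + (1 / 4 : ℝ) • 1) ^ p).trace ≤ 1 / 2 := by
    have hhalf : K + (1 / 4 : ℝ) • 1 ≤ (1 / 2 : ℝ) • 1 :=
      (add_le_add_left h _).trans_eq (by module)
    refine (trace_pow_le (add_nonneg hK (smul_nonneg (by norm_num) zero_le_one)) (by norm_num)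
      hhalf p).trans ?_
    rw [one_div, inv_pow, ← div_eq_mul_inv, div_le_iff₀ (by positivity)]
    have : (2 * Fintype.card J : ℝ) ≤ 2 ^ p := by exact_mod_cast hcard
    linarith
  have hcov : conjSum B ((20 * σ)⁻¹ • 1 * (20 * σ)⁻¹ • 1) = ((20 * σ)⁻¹ ^ 2) • conjSum B 1 := by
    rw [← map_smul, smul_mul_smul_comm, one_mul, sq]
  have hcovTrace : (((100 : ℝ) • ((20 * σ)⁻¹ ^ 2) • conjSum B 1 + (1 / 4 : ℝ) • 1) ^ p).trace ≤
      1 / 2 := by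
    refine htrace (smul_nonneg (by norm_num) (smul_nonneg (by positivity)
      (conjSum_nonneg hB zero_le_one))) ?_
    rw [smul_smul]
    refine (smul_le_smul_of_nonneg_left hB1 (by positivity)).trans_eq ?_
    rw [smul_smul]
    congr 1
    field_simp
    norm_num
  have hresTrace : ((ρ⁻¹ • (20 * σ)⁻¹ • (1 : Matrix J J ℝ) + (1 / 4 : ℝ) • 1) ^ p).trace ≤
      1 / 2 := by
    refine htrace (smul_nonneg (by positivity) (smul_nonneg (by positivity) zero_le_one)) ?_
    rw [smul_smul, ← mul_inv, one_div]
    exact smul_le_smul_of_nonneg_right (inv_anti₀ (by norm_num) (by linarith)) zero_le_one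
  rw [potential, hinv, hcov]
  linarith

end PotentialBounds

section Feasibility

lemma sub_smul_dotProduct_self {κ : Type*} [Fintype κ] {y z : κ → ℝ} (hy : y ⬝ᵥ y = 1)
    (hyz : y ⬝ᵥ z = 0) (e : ℝ) : (z - e • y) ⬝ᵥ (z - e • y) = z ⬝ᵥ z + e ^ 2 := by
  simp only [sub_dotProduct, dotProduct_sub, smul_dotProduct, dotProduct_smul,
    dotProduct_comm z y, hyz, hy, smul_eq_mul]
  ring

variable {J κ : Type*} [Fintype J] [DecidableEq J] [Fintype κ]

/-- The move `z` away from the fractional colouring `x₀`, together with the barrier `Y`, is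
feasible: the new colouring lies in the cube, `Y` is positive definite of small potential, and `Y`
plus the signed sum `linearCombination ℝ A z` is bounded, with an allowance growing linearly in
`z ⬝ᵥ z`. -/
structure IsFeasible (A B : κ → Matrix J J ℝ) (x₀ : κ → ℝ) (σ ρ : ℝ) (p : ℕ) (z : κ → ℝ)
    (Y : Matrix J J ℝ) : Prop where
  mem_Icc : ∀ i, x₀ i + z i ∈ Set.Icc (-1 : ℝ) 1
  posDef : Y.PosDef
  add_le : Y + linearCombination ℝ A z ≤ (20 * σ + 9 * σ / Fintype.card κ * (z ⬝ᵥ z)) • 1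
  potential_le : potential B ρ⁻¹ p Y ≤ 1

variable {A B : κ → Matrix J J ℝ} {x₀ z : κ → ℝ} {σ ρ b : ℝ} {p : ℕ} {Y : Matrix J J ℝ}

lemma isFeasible_zero (hB : ∀ i, IsSelfAdjoint (B i)) (hx₀ : ∀ i, x₀ i ∈ Set.Icc (-1 : ℝ) 1)
    (hσ : 0 < σ) (hρσ : 2 ≤ ρ * σ) (hB1 : conjSum B 1 ≤ σ ^ 2 • 1)
    (hcard : 2 * Fintype.card J ≤ 2 ^ p) : IsFeasible A B x₀ σ ρ p 0 ((20 * σ) • 1) where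
  mem_Icc := by simpa only [Pi.zero_apply, add_zero] using hx₀
  posDef := PosDef.one.smul (by positivity)
  add_le := by simp only [map_zero, add_zero, dotProduct_zero, mul_zero, le_refl]
  potential_le := potential_smul_one_le hB hσ hρσ hB1 hcard

namespace IsFeasible

lemma smul_one_le (hB : ∀ i, IsSelfAdjoint (B i)) (hρ : 0 < ρ) (hp : p ≠ 0)
    (h : IsFeasible A B x₀ σ ρ p z Y) : ρ⁻¹ • 1 ≤ Y :=
  smul_one_le_of_inv_le h.posDef hρ
    (conjSum_inv_mul_inv_and_inv_le_of_potential_le hB h.posDef hρ hp h.potential_le).2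

lemma add_le_smul_one (hx₀ : ∀ i, x₀ i ∈ Set.Icc (-1 : ℝ) 1) (hσ : 0 < σ)
    (h : IsFeasible A B x₀ σ ρ p z Y) : Y + linearCombination ℝ A z ≤ (56 * σ) • 1 := by
  refine h.add_le.trans (smul_le_smul_of_nonneg_right ?_ zero_le_one)
  have hz : z ⬝ᵥ z ≤ Fintype.card κ * 4 := by
    rw [dotProduct, ← nsmul_eq_mul]
    refine Finset.sum_le_card_nsmul _ _ _ fun i _ => ?_
    obtain ⟨hlo, hhi⟩ := h.mem_Icc i
    obtain ⟨hlo₀, hhi₀⟩ := hx₀ i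
    nlinarith
  have : 9 * σ / Fintype.card κ * (z ⬝ᵥ z) ≤ 36 * σ := by
    calc 9 * σ / Fintype.card κ * (z ⬝ᵥ z) ≤ 9 * σ / Fintype.card κ * (Fintype.card κ * 4) := by
          gcongr
      _ = 36 * σ * (Fintype.card κ / Fintype.card κ) := by ring
      _ ≤ 36 * σ := mul_le_of_le_one_right (by positivity) (div_self_le_one _)
  linarith

lemma linearCombination_le (hx₀ : ∀ i, x₀ i ∈ Set.Icc (-1 : ℝ) 1) (hσ : 0 < σ)
    (h : IsFeasible A B x₀ σ ρ p z Y) : linearCombination ℝ A z ≤ (56 * σ) • 1 :=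
  (le_add_of_nonneg_left h.posDef.posSemidef.nonneg).trans (h.add_le_smul_one hx₀ hσ)

lemma le_smul_one (hx₀ : ∀ i, x₀ i ∈ Set.Icc (-1 : ℝ) 1) (hσ : 0 < σ)
    (hA : ∀ c : ℝ, linearCombination ℝ A z ≤ c • 1 → -(c • 1) ≤ linearCombination ℝ A z)
    (h : IsFeasible A B x₀ σ ρ p z Y) : Y ≤ (112 * σ) • 1 := by
  have hneg := hA _ (h.linearCombination_le hx₀ hσ)
  calc Y ≤ Y + ((56 * σ) • 1 + linearCombination ℝ A z) :=
        le_add_of_nonneg_right (neg_le_iff_add_nonneg'.1 hneg)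
    _ = (Y + linearCombination ℝ A z) + (56 * σ) • 1 := by abel
    _ ≤ (56 * σ) • 1 + (56 * σ) • 1 := add_le_add_left (h.add_le_smul_one hx₀ hσ) _
    _ = (112 * σ) • 1 := by module

lemma sub_smul {y : κ → ℝ} {D : Matrix J J ℝ} {e : ℝ} (h : IsFeasible A B x₀ σ ρ p z Y)
    (hy : y ⬝ᵥ y = 1) (hyz : y ⬝ᵥ z = 0) (hD : D ≤ (9 * σ / Fintype.card κ) • 1)
    (hbox : ∀ i, x₀ i + (z - e • y) i ∈ Set.Icc (-1 : ℝ) 1)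
    (hpos : (Y + e • linearCombination ℝ A y + e ^ 2 • D).PosDef)
    (hpot : potential B ρ⁻¹ p (Y + e • linearCombination ℝ A y + e ^ 2 • D) ≤
      potential B ρ⁻¹ p Y) :
    IsFeasible A B x₀ σ ρ p (z - e • y) (Y + e • linearCombination ℝ A y + e ^ 2 • D) where
  mem_Icc := hbox
  posDef := hpos
  add_le := by
    have hsplit : Y + e • linearCombination ℝ A y + e ^ 2 • D + linearCombination ℝ A (z - e • y) =
        (Y + linearCombination ℝ A z) + e ^ 2 • D := by
      rw [map_sub, map_smul]
      module
    rw [hsplit, sub_smul_dotProduct_self hy hyz]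
    refine (add_le_add h.add_le (smul_le_smul_of_nonneg_left hD (sq_nonneg e))).trans_eq ?_
    module
  potential_le := hpot.trans h.potential_le

end IsFeasible

lemma isCompact_setOf_isFeasible (hB : ∀ i, IsSelfAdjoint (B i))
    (hx₀ : ∀ i, x₀ i ∈ Set.Icc (-1 : ℝ) 1) (hσ : 0 < σ) (hρ : 0 < ρ) (hp : p ≠ 0)
    (hA : ∀ (z : κ → ℝ) (c : ℝ), linearCombination ℝ A z ≤ c • 1 →
      -(c • 1) ≤ linearCombination ℝ A z) :
    IsCompact {q : (κ → ℝ) × Matrix J J ℝ | IsFeasible A B x₀ σ ρ p q.1 q.2} := by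
  let box : Set ((κ → ℝ) × Matrix J J ℝ) :=
    (Set.univ.pi fun _ => Set.Icc (-2) 2) ×ˢ Set.Icc (-((112 * σ) • 1)) ((112 * σ) • 1)
  have hbox : IsCompact box :=
    (isCompact_univ_pi fun _ => isCompact_Icc).prod (isCompact_Icc_smul_one _)
  let K : Set ((κ → ℝ) × Matrix J J ℝ) :=
    {q | (∀ i, x₀ i + q.1 i ∈ Set.Icc (-1 : ℝ) 1) ∧ ρ⁻¹ • 1 ≤ q.2 ∧
      q.2 + linearCombination ℝ A q.1 ≤
        (20 * σ + 9 * σ / Fintype.card κ * (q.1 ⬝ᵥ q.1)) • 1}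
  have hposDef {q : (κ → ℝ) × Matrix J J ℝ} (hq : q ∈ K) : q.2.PosDef :=
    posDef_of_smul_one_le (inv_pos.2 hρ) hq.2.1
  have hK : IsClosed K := by
    have hlin : Continuous (linearCombination ℝ A) := LinearMap.continuous_of_finiteDimensional _
    simp only [K, Set.ofPred_and, Set.ofPred_forall]
    refine (isClosed_iInter fun i => isClosed_Icc.preimage
      (f := fun q : (κ → ℝ) × Matrix J J ℝ => x₀ i + q.1 i) ?_).inter
      ((isClosed_le ?_ ?_).inter (isClosed_le ?_ ?_)) <;> fun_prop
  have hpotential : ContinuousOn (fun q => potential B ρ⁻¹ p q.2) K := fun q hq =>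
    ((continuousAt_potential B ρ⁻¹ p (hposDef hq)).comp continuousAt_snd).continuousWithinAt
  refine hbox.of_isClosed_subset ?_ fun q (hq : IsFeasible A B x₀ σ ρ p q.1 q.2) => ?_
  · convert! hpotential.preimage_isClosed_of_isClosed hK (isClosed_Iic (a := (1 : ℝ))) using 1
    ext q
    exact ⟨fun h => ⟨⟨h.mem_Icc, h.smul_one_le hB hρ hp, h.add_le⟩, h.potential_le⟩,
      fun h => ⟨h.1.1, hposDef h.1, h.1.2.2, h.2⟩⟩
  · refine ⟨fun i _ => ?_, ?_, hq.le_smul_one hx₀ hσ (hA q.1)⟩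
    · obtain ⟨hlo, hhi⟩ := hq.mem_Icc i
      obtain ⟨hlo₀, hhi₀⟩ := hx₀ i
      constructor <;> linarith
    · exact (neg_nonpos.2 (smul_nonneg (by positivity) zero_le_one)).trans
        hq.posDef.posSemidef.nonneg

end Feasibility

section Directions

variable {J κ ν : Type*} [Fintype J] [DecidableEq J] [Fintype κ] [Fintype ν]
  {B : κ → Matrix J J ℝ} {y : ν → κ → ℝ} {x z : κ → ℝ} {R Y : Matrix J J ℝ} {σ : ℝ}

lemma IsBessel.conjSum_linearCombination_le_smul_one (hy : IsBessel y)
    (hB : ∀ i, IsSelfAdjoint (B i)) (hR : IsSelfAdjoint R) (hσ : 0 < σ)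
    (hB1 : conjSum B 1 ≤ σ ^ 2 • 1) (hBR : conjSum B (R * R) ≤ (1 / 100 : ℝ) • 1) :
    conjSum (fun j => linearCombination ℝ B (y j)) R ≤ (σ / 10) • 1 := by
  have hamgm : R ≤ (5 * σ) • (R * R) + (20 * σ)⁻¹ • 1 := by
    have hsq := (hR.sub ((IsSelfAdjoint.all (10 * σ)⁻¹).smul
      (.one (Matrix J J ℝ)))).mul_self_nonneg
    rw [← sub_nonneg]
    convert! smul_nonneg (by positivity : 0 ≤ 5 * σ) hsq using 1
    simp only [mul_sub, sub_mul, mul_smul_comm, smul_mul_assoc, mul_one, one_mul]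
    match_scalars <;> field_simp <;> norm_num
  have hBR' := (hy.conjSum_linearCombination_le hB hR).trans hBR
  have hB1' := hy.conjSum_linearCombination_le hB (.one (Matrix J J ℝ))
  rw [mul_one] at hB1'
  refine (conjSum_mono (fun j => isSelfAdjoint_linearCombination hB _) hamgm).trans ?_
  rw [map_add, map_smul, map_smul]
  refine (add_le_add (smul_le_smul_of_nonneg_left hBR' (by positivity))
    (smul_le_smul_of_nonneg_left (hB1'.trans hB1) (by positivity))).trans_eq ?_
  match_scalars
  field_simp
  norm_num

lemma drift_nonneg {A : ν → Matrix J J ℝ} (hA : ∀ j, IsSelfAdjoint (A j)) (hσ : 0 ≤ σ)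
    (hY : Y.PosDef) : 0 ≤ drift A σ Y :=
  smul_nonneg (by positivity) (add_nonneg (conjSum_nonneg hA hY.inv.posSemidef.nonneg)
    (smul_nonneg hσ zero_le_one))

lemma drift_le_smul_one [Nonempty κ] {A : ν → Matrix J J ℝ} (hσ : 0 ≤ σ)
    (hA : conjSum A Y⁻¹ ≤ (σ / 10) • 1) (hcard : Fintype.card κ ≤ 8 * Fintype.card ν) :
    drift A σ Y ≤ (9 * σ / Fintype.card κ) • 1 := by
  have hκ : (0 : ℝ) < Fintype.card κ := by exact_mod_cast Fintype.card_pos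
  have hcard' : (Fintype.card κ : ℝ) ≤ 8 * Fintype.card ν := by exact_mod_cast hcard
  have hν : (0 : ℝ) < Fintype.card ν := by linarith
  calc drift A σ Y ≤ (Fintype.card ν : ℝ)⁻¹ • ((σ / 10) • 1 + σ • 1) :=
        smul_le_smul_of_nonneg_left (add_le_add_left hA _) (by positivity)
    _ = (11 / 10 * σ / Fintype.card ν) • 1 := by module
    _ ≤ (9 * σ / Fintype.card κ) • 1 := by
        refine smul_le_smul_of_nonneg_right ?_ zero_le_one
        rw [div_le_div_iff₀ hν hκ]
        nlinarith

lemma exists_isBessel_of_linearMap {W : Type*} [AddCommGroup W] [Module ℝ W]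
    [FiniteDimensional ℝ W] (ψ : (κ → ℝ) →ₗ[ℝ] W) :
    ∃ (N : ℕ) (y : Fin N → κ → ℝ), Fintype.card κ ≤ N + Module.finrank ℝ W ∧ IsBessel y ∧
      ∀ j, y j ⬝ᵥ y j = 1 ∧ ψ (y j) = 0 := by
  let φ : EuclideanSpace ℝ κ →ₗ[ℝ] W := ψ ∘ₗ (WithLp.linearEquiv 2 ℝ (κ → ℝ)).toLinearMap
  let e := stdOrthonormalBasis ℝ (LinearMap.ker φ)
  have he : Orthonormal ℝ fun j => (e j : EuclideanSpace ℝ κ) :=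
    e.orthonormal.comp_linearIsometry (LinearMap.ker φ).subtypeₗᵢ
  have hinner (u v : EuclideanSpace ℝ κ) : inner ℝ u v = v.ofLp ⬝ᵥ u.ofLp := rfl
  refine ⟨_, fun j => (e j : EuclideanSpace ℝ κ).ofLp, ?_, fun q => ?_, fun j => ⟨?_, ?_⟩⟩
  · have hrank := φ.finrank_range_add_finrank_ker
    have hrange := Submodule.finrank_le (LinearMap.range φ)
    rw [finrank_euclideanSpace] at hrank
    omega
  · have hbessel := he.sum_inner_products_le (s := Finset.univ) (WithLp.toLp 2 q)
    rw [← real_inner_self_eq_norm_sq] at hbessel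
    simpa only [hinner, Real.norm_eq_abs, sq_abs, dotProduct_comm q] using hbessel
  · rw [← hinner, real_inner_self_eq_norm_sq, he.1 j, one_pow]
  · exact (e j).2

lemma exists_directions {V : Type*} [AddCommGroup V] [Module ℝ V] [FiniteDimensional ℝ V]
    (ψ : (κ → ℝ) →ₗ[ℝ] V) (hψ : 2 * Module.finrank ℝ V ≤ Fintype.card κ) (F : Finset κ)
    (hF : 4 * F.card < Fintype.card κ) (hκ : 6 ≤ Fintype.card κ) (z : κ → ℝ) :
    ∃ (N : ℕ) (y : Fin N → κ → ℝ), Fintype.card κ ≤ 8 * N ∧ IsBessel y ∧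
      ∀ j, y j ⬝ᵥ y j = 1 ∧ ψ (y j) = 0 ∧ (∀ i ∈ F, y j i = 0) ∧ y j ⬝ᵥ z = 0 := by
  let restrict : (κ → ℝ) →ₗ[ℝ] F → ℝ := LinearMap.funLeft ℝ ℝ Subtype.val
  obtain ⟨N, y, hN, hy, hyψ⟩ := exists_isBessel_of_linearMap
    (ψ.prod (restrict.prod (dotProductBilin ℝ ℝ z)))
  refine ⟨N, y, ?_, hy, fun j => ?_⟩
  · rw [Module.finrank_prod, Module.finrank_prod, Module.finrank_fintype_fun_eq_card,
      Fintype.card_coe, Module.finrank_self] at hN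
    omega
  · obtain ⟨hunit, hker⟩ := hyψ j
    obtain ⟨hψj, hFz⟩ := Prod.ext_iff.1 hker
    obtain ⟨hFj, hzj⟩ := Prod.ext_iff.1 hFz
    exact ⟨hunit, hψj, fun i hi => congrFun hFj ⟨i, hi⟩, (dotProduct_comm _ _).trans hzj⟩

lemma eventually_forall_add_smul_mem_Icc {κ : Type*} [Finite κ] {x z : κ → ℝ}
    (hx : ∀ i, x i ∈ Set.Icc (-1 : ℝ) 1) (hz : ∀ i, |x i| = 1 → z i = 0) :
    ∀ᶠ e in 𝓝 (0 : ℝ), ∀ i, x i + e * z i ∈ Set.Icc (-1 : ℝ) 1 := by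
  refine eventually_all.2 fun i => ?_
  by_cases hi : |x i| = 1
  · simp only [hz i hi, mul_zero, add_zero, hx i, eventually_true]
  · have hmem : x i + 0 * z i ∈ Set.Ioo (-1 : ℝ) 1 := by
      rw [zero_mul, add_zero]
      exact abs_lt.1 (lt_of_le_of_ne (abs_le.2 (hx i)) hi)
    have hcont : ContinuousAt (fun e : ℝ => x i + e * z i) 0 := by fun_prop
    exact (hcont.eventually_mem (isOpen_Ioo.mem_nhds hmem)).mono fun _ he =>
      Set.Ioo_subset_Icc_self he

end Directions

section PartialColouring

variable {J κ : Type*} [Fintype J] [DecidableEq J] [Fintype κ] [Nonempty J]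
  {A B : κ → Matrix J J ℝ} {x₀ z : κ → ℝ} {σ ρ b : ℝ} {P : ℕ} {Y : Matrix J J ℝ}

lemma IsFeasible.exists_dotProduct_self_lt [Nonempty κ]
    (h : IsFeasible A B x₀ σ ρ (P + 2) z Y)
    (hB : ∀ i, IsSelfAdjoint (B i)) (hb : CrossingBound B b) (hσ : 0 < σ) (hρ : 0 < ρ)
    (hρσ : ρ * σ = P + 2) (hbρ : (P + 2) * b ^ 2 * ρ ^ 4 ≤ 1 / 160000)
    (hB1 : conjSum B 1 ≤ σ ^ 2 • 1) (hY : Y ≤ (112 * σ) • 1) {N : ℕ} {y : Fin N → κ → ℝ}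
    (hN : Fintype.card κ ≤ 8 * N) (hy : IsBessel y) (hunit : ∀ j, y j ⬝ᵥ y j = 1)
    (hyA : ∀ j, linearCombination ℝ A (y j) = linearCombination ℝ B (y j))
    (hyx : ∀ j i, |x₀ i + z i| = 1 → y j i = 0) (hyz : ∀ j, y j ⬝ᵥ z = 0) :
    ∃ z' Y', IsFeasible A B x₀ σ ρ (P + 2) z' Y' ∧ z ⬝ᵥ z < z' ⬝ᵥ z' := by
  have hp : P + 2 ≠ 0 := Nat.succ_ne_zero _
  have hsa (j : Fin N) : IsSelfAdjoint (linearCombination ℝ A (y j)) :=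
    hyA j ▸ isSelfAdjoint_linearCombination hB _
  obtain ⟨hcov, hYρ⟩ :=
    conjSum_inv_mul_inv_and_inv_le_of_potential_le hB h.posDef hρ hp h.potential_le
  have hD : drift (fun j => linearCombination ℝ A (y j)) σ Y ≤ (9 * σ / Fintype.card κ) • 1 := by
    refine drift_le_smul_one hσ.le ?_ (by rwa [Fintype.card_fin])
    simpa only [hyA] using
      hy.conjSum_linearCombination_le_smul_one hB h.posDef.inv.isHermitian hσ hB1 hcov
  have : Nonempty (Fin N) := Fin.pos_iff_nonempty.1 (by have := Fintype.card_pos (α := κ); omega)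
  have hpos : ∀ᶠ e in 𝓝 (0 : ℝ), ∀ j, (Y + e • linearCombination ℝ A (y j) +
      e ^ 2 • drift (fun j => linearCombination ℝ A (y j)) σ Y).PosDef :=
    eventually_all.2 fun j => eventually_posDef_add_smul (inv_pos.2 hρ)
      (h.smul_one_le hB hρ hp) (hsa j) (drift_nonneg hsa hσ.le h.posDef)
  have hbox : ∀ᶠ e in 𝓝 (0 : ℝ), ∀ j i, x₀ i + (z - e • y j) i ∈ Set.Icc (-1 : ℝ) 1 :=
    eventually_all.2 fun j => by
      simpa only [Pi.sub_apply, Pi.smul_apply, Pi.neg_apply, smul_eq_mul, mul_neg, add_assoc,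
        sub_eq_add_neg] using eventually_forall_add_smul_mem_Icc (z := -y j) h.mem_Icc
          fun i hi => by rw [Pi.neg_apply, hyx j i hi, neg_zero]
  have hpot := frequently_exists_potential_le hB hb hy h.posDef hρ hσ hρσ hbρ hYρ
    (smul_one_le_inv h.posDef (by positivity) hY) hcov hyA
  obtain ⟨e, ⟨j, hpot⟩, ⟨hpos, hbox⟩, he : e ≠ 0⟩ := (hpot.and_eventually
    (((hpos.and hbox).filter_mono nhdsWithin_le_nhds).and
      (self_mem_nhdsWithin (s := {(0 : ℝ)}ᶜ)))).exists
  refine ⟨_, _, h.sub_smul (hunit j) (hyz j) hD (hbox j) (hpos j) hpot, ?_⟩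
  rw [sub_smul_dotProduct_self (hunit j) (hyz j)]
  exact lt_add_of_pos_right _ (by positivity)

theorem exists_partial_coloring_of_crossingBound (hB : ∀ i, IsSelfAdjoint (B i))
    (hb : CrossingBound B b) (hx₀ : ∀ i, x₀ i ∈ Set.Icc (-1 : ℝ) 1) (hσ : 0 < σ) (hρ : 0 < ρ)
    (hρσ : ρ * σ = P + 2) (hbρ : (P + 2) * b ^ 2 * ρ ^ 4 ≤ 1 / 160000)
    (hB1 : conjSum B 1 ≤ σ ^ 2 • 1) (hcard : 2 * Fintype.card J ≤ 2 ^ (P + 2))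
    (hκ : 6 ≤ Fintype.card κ)
    (hA : ∀ (z : κ → ℝ) (c : ℝ), linearCombination ℝ A z ≤ c • 1 →
      -(c • 1) ≤ linearCombination ℝ A z)
    {V : Type*} [AddCommGroup V] [Module ℝ V] [FiniteDimensional ℝ V] (ψ : (κ → ℝ) →ₗ[ℝ] V)
    (hV : 2 * Module.finrank ℝ V ≤ Fintype.card κ)
    (hψ : ∀ y, ψ y = 0 → linearCombination ℝ A y = linearCombination ℝ B y) :
    ∃ z : κ → ℝ, (∀ i, x₀ i + z i ∈ Set.Icc (-1 : ℝ) 1) ∧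
      Fintype.card κ ≤ 4 * (Finset.univ.filter fun i => |x₀ i + z i| = 1).card ∧
      linearCombination ℝ A z ≤ (56 * σ) • 1 := by
  have hzero : IsFeasible A B x₀ σ ρ (P + 2) 0 ((20 * σ) • 1) :=
    isFeasible_zero hB hx₀ hσ (by rw [hρσ]; linarith [P.cast_nonneg (α := ℝ)]) hB1 hcard
  obtain ⟨⟨z, Y⟩, (hfeas : IsFeasible A B x₀ σ ρ (P + 2) z Y), hmax⟩ :=
    (isCompact_setOf_isFeasible hB hx₀ hσ hρ (Nat.succ_ne_zero _) hA).exists_isMaxOn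
      ⟨(0, _), hzero⟩ (f := fun q : (κ → ℝ) × Matrix J J ℝ => q.1 ⬝ᵥ q.1)
      (by fun_prop)
  refine ⟨z, hfeas.mem_Icc, ?_, hfeas.linearCombination_le hx₀ hσ⟩
  by_contra! htight
  obtain ⟨N, y, hN, hy, hprop⟩ := exists_directions ψ hV _ htight hκ z
  choose hunit hker hyx hyz using hprop
  have : Nonempty κ := Fintype.card_pos_iff.1 (by omega)
  obtain ⟨z', Y', hfeas', hlt⟩ := hfeas.exists_dotProduct_self_lt hB hb hσ hρ hρσ hbρ hB1
    (hfeas.le_smul_one hx₀ hσ (hA z)) hN hy hunit (fun j => hψ _ (hker j))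
    (fun j i hi => hyx j i (Finset.mem_filter.2 ⟨Finset.mem_univ i, hi⟩)) hyz
  exact hlt.not_ge (hmax (show (z', Y') ∈ {q | IsFeasible A B x₀ σ ρ (P + 2) q.1 q.2} from hfeas'))

end PartialColouring

/-! ### Spectral truncation -/

section Isometry

variable {J s : Type*} [Fintype J] [Fintype s] [DecidableEq s] {E : Matrix J s ℝ}

lemma mulVec_dotProduct_self_of_isometry (hE : Eᵀ * E = 1) (x : s → ℝ) :
    (E *ᵥ x) ⬝ᵥ (E *ᵥ x) = x ⬝ᵥ x := by
  rw [dotProduct_mulVec, ← mulVec_transpose, mulVec_mulVec, hE, one_mulVec]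

lemma transpose_mulVec_dotProduct_self_le (hE : Eᵀ * E = 1) (u : J → ℝ) :
    (Eᵀ *ᵥ u) ⬝ᵥ (Eᵀ *ᵥ u) ≤ u ⬝ᵥ u := by
  simpa only [one_mul, mulVec_transpose] using vecMul_dotProduct_self_le zero_le_one
    (fun x => ((mulVec_dotProduct_self_of_isometry hE x).trans (one_mul _).symm).le) u

variable [DecidableEq J]

lemma transpose_mulVec_one_sub_mulVec (hE : Eᵀ * E = 1) (u : J → ℝ) :
    Eᵀ *ᵥ ((1 - E * Eᵀ) *ᵥ u) = 0 := by
  rw [mulVec_mulVec, Matrix.mul_sub, Matrix.mul_one, ← Matrix.mul_assoc, hE, Matrix.one_mul,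
    sub_self, zero_mulVec]

lemma one_sub_mulVec_dotProduct_self_le (hE : Eᵀ * E = 1) (u : J → ℝ) :
    ((1 - E * Eᵀ) *ᵥ u) ⬝ᵥ ((1 - E * Eᵀ) *ᵥ u) ≤ u ⬝ᵥ u := by
  have horth : ((1 - E * Eᵀ) *ᵥ u) ⬝ᵥ (E *ᵥ (Eᵀ *ᵥ u)) = 0 := by
    rw [dotProduct_mulVec, ← mulVec_transpose, transpose_mulVec_one_sub_mulVec hE,
      zero_dotProduct]
  have hsplit : u = (1 - E * Eᵀ) *ᵥ u + E *ᵥ (Eᵀ *ᵥ u) := by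
    rw [sub_mulVec, one_mulVec, mulVec_mulVec, sub_add_cancel]
  nth_rw 3 4 [hsplit]
  rw [add_dotProduct, dotProduct_add, dotProduct_add, horth,
    dotProduct_comm (E *ᵥ _) ((1 - E * Eᵀ) *ᵥ u), horth]
  linarith [dotProduct_self_nonneg (E *ᵥ (Eᵀ *ᵥ u))]

lemma isBessel_one_sub (hE : Eᵀ * E = 1) : IsBessel (1 - E * Eᵀ) := fun q =>
  (dotProduct_self_eq_sum_sq ((1 - E * Eᵀ) *ᵥ q)).symm.trans_le
    (one_sub_mulVec_dotProduct_self_le hE q)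

lemma exists_spectral_truncation {M : Matrix J J ℝ} (hM : 0 ≤ M) (τ : ℝ) :
    ∃ (s : Finset J) (E : Matrix J s ℝ), Eᵀ * E = 1 ∧ τ * s.card ≤ M.trace ∧
      ∀ u, Eᵀ *ᵥ u = 0 → u ⬝ᵥ M *ᵥ u ≤ τ * (u ⬝ᵥ u) := by
  have hM' := nonneg_iff_posSemidef.1 hM
  set l := hM'.1.eigenvalues
  set U : Matrix J J ℝ := ↑hM'.1.eigenvectorUnitary
  have hUU : Uᵀ * U = 1 := Unitary.coe_star_mul_self hM'.1.eigenvectorUnitary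
  have hUU' : U * Uᵀ = 1 := Unitary.coe_mul_star_self hM'.1.eigenvectorUnitary
  have hspec : M = U * diagonal l * Uᵀ := hM'.1.spectral_theorem
  have hform (u : J → ℝ) : u ⬝ᵥ M *ᵥ u = ∑ k, l k * (Uᵀ *ᵥ u) k ^ 2 := by
    rw [hspec, ← mulVec_mulVec, ← mulVec_mulVec, dotProduct_mulVec, ← mulVec_transpose]
    exact Finset.sum_congr rfl fun k _ => by rw [mulVec_diagonal]; ring
  have hnorm (u : J → ℝ) : ∑ k, (Uᵀ *ᵥ u) k ^ 2 = u ⬝ᵥ u := by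
    rw [← dotProduct_self_eq_sum_sq]
    exact mulVec_dotProduct_self_of_isometry (by rwa [transpose_transpose]) u
  let s : Finset J := Finset.univ.filter fun k => τ < l k
  refine ⟨s, U.submatrix id Subtype.val, ?_, ?_, fun u hu => ?_⟩
  · rw [transpose_submatrix, ← submatrix_mul _ _ _ _ _ Function.bijective_id, hUU]
    exact submatrix_one _ Subtype.val_injective
  · rw [mul_comm, ← nsmul_eq_mul, hM'.1.trace_eq_sum_eigenvalues]
    exact (Finset.card_nsmul_le_sum s l τ fun k hk => (Finset.mem_filter.1 hk).2.le).trans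
      (Finset.sum_le_univ_sum_of_nonneg hM'.eigenvalues_nonneg)
  · rw [hform, ← hnorm, Finset.mul_sum]
    refine Finset.sum_le_sum fun k _ => ?_
    by_cases hk : τ < l k
    · have : (Uᵀ *ᵥ u) k = 0 := congrFun hu ⟨k, Finset.mem_filter.2 ⟨Finset.mem_univ k, hk⟩⟩
      simp only [this, ne_eq, OfNat.ofNat_ne_zero, not_false_eq_true, zero_pow, mul_zero, le_refl]
    · exact mul_le_mul_of_nonneg_right (not_lt.1 hk) (sq_nonneg _)

end Isometry

section CovarianceTruncation

variable {J κ : Type*} [Fintype J] [Fintype κ] {A : κ → Matrix J J ℝ}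

lemma frobNormSq_linearCombination_eq (A : κ → Matrix J J ℝ) (c : κ → ℝ) :
    frobNormSq (linearCombination ℝ A c) =
      c ⬝ᵥ ((familyMatrix A)ᵀ * familyMatrix A) *ᵥ c := by
  rw [← familyMatrix_mulVec_dotProduct_self, ← mulVec_mulVec, dotProduct_mulVec _ (familyMatrix A)ᵀ,
    vecMul_transpose]

lemma trace_transpose_mul_familyMatrix (A : κ → Matrix J J ℝ) :
    ((familyMatrix A)ᵀ * familyMatrix A).trace = ∑ i, frobNormSq (A i) := by
  rw [trace_transpose_mul_self, frobNormSq, Finset.sum_comm]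
  exact Finset.sum_congr rfl fun i _ => Fintype.sum_prod_type _

variable [DecidableEq J]

lemma exists_covariance_truncation (hA : ∀ i, IsSelfAdjoint (A i)) {F : ℝ} (hF : 0 < F)
    (hAF : ∀ i, frobNormSq (A i) ≤ F) :
    ∃ (s : Finset κ) (ψ : (κ → ℝ) →ₗ[ℝ] (s → ℝ)) (B : κ → Matrix J J ℝ),
      2 * s.card ≤ Fintype.card κ ∧ (∀ i, IsSelfAdjoint (B i)) ∧
      (∀ y, ψ y = 0 → linearCombination ℝ A y = linearCombination ℝ B y) ∧
      (∀ c, frobNormSq (linearCombination ℝ B c) ≤ 2 * F * (c ⬝ᵥ c)) ∧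
      conjSum B 1 ≤ conjSum A 1 := by
  classical
  obtain ⟨s, E, hE, hs, htrunc⟩ := exists_spectral_truncation
    (posSemidef_conjTranspose_mul_self (familyMatrix A)).nonneg (2 * F)
  set Q : Matrix κ κ ℝ := 1 - E * Eᵀ
  have hQ : Qᵀ = Q := by
    simp only [Q, transpose_sub, transpose_one, transpose_mul, transpose_transpose]
  have hlin (c : κ → ℝ) : linearCombination ℝ (fun i => linearCombination ℝ A (Q i)) c =
      linearCombination ℝ A (Q *ᵥ c) := by
    rw [← vecMul_transpose, hQ, vecMul_eq_sum, Fintype.linearCombination_apply]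
    simp only [← map_smul, ← map_sum]
  refine ⟨s, Eᵀ.mulVecLin, fun i => linearCombination ℝ A (Q i), ?_,
    fun i => isSelfAdjoint_linearCombination hA _, fun y hy => ?_, fun c => ?_, ?_⟩
  · have htrace : 2 * F * s.card ≤ Fintype.card κ * F :=
      hs.trans ((trace_transpose_mul_familyMatrix A).trans_le
        ((Finset.sum_le_card_nsmul _ _ F fun i _ => hAF i).trans_eq (nsmul_eq_mul _ _)))
    have : (2 * s.card : ℝ) ≤ Fintype.card κ := le_of_mul_le_mul_right (by linarith) hF
    exact_mod_cast this
  · rw [hlin, sub_mulVec, one_mulVec, ← mulVec_mulVec, show Eᵀ *ᵥ y = 0 from hy, mulVec_zero,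
      sub_zero]
  · rw [hlin, frobNormSq_linearCombination_eq]
    exact (htrunc _ (transpose_mulVec_one_sub_mulVec hE c)).trans
      (mul_le_mul_of_nonneg_left (one_sub_mulVec_dotProduct_self_le hE c) (by positivity))
  · have := (isBessel_one_sub hE).conjSum_linearCombination_le hA (.one _)
    rwa [mul_one] at this

end CovarianceTruncation

/-! ### Partial and full colourings -/

section SignedDouble

variable {J : Type*}

/-- The block-diagonal matrix `diag(X, -X)`, whose upper bounds are two-sided bounds on `X`. -/
def signedDouble : Matrix J J ℝ →ₗ[ℝ] Matrix (J ⊕ J) (J ⊕ J) ℝ where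
  toFun X := fromBlocks X 0 0 (-X)
  map_add' X Y := by rw [fromBlocks_add, add_zero, neg_add]
  map_smul' c X := by rw [RingHom.id_apply, fromBlocks_smul, smul_zero, smul_neg]

lemma signedDouble_apply (X : Matrix J J ℝ) : signedDouble X = fromBlocks X 0 0 (-X) := rfl

lemma signedDouble_linearCombination {κ : Type*} [Fintype κ] (A : κ → Matrix J J ℝ) (c : κ → ℝ) :
    linearCombination ℝ (fun i => signedDouble (A i)) c =
      signedDouble (linearCombination ℝ A c) := by
  simp only [Fintype.linearCombination_apply, map_sum, map_smul]

lemma frobNormSq_signedDouble [Fintype J] (X : Matrix J J ℝ) :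
    frobNormSq (signedDouble X) = 2 * frobNormSq X := by
  simp [signedDouble_apply, frobNormSq, two_mul]

variable [Finite J]

lemma posSemidef_fromBlocks_zero_iff {X Z : Matrix J J ℝ} :
    (fromBlocks X 0 0 Z).PosSemidef ↔ X.PosSemidef ∧ Z.PosSemidef := by
  refine ⟨fun h => ⟨h.submatrix Sum.inl, h.submatrix Sum.inr⟩, fun ⟨hX, hZ⟩ => ?_⟩
  cases nonempty_fintype J
  refine .of_dotProduct_mulVec_nonneg (hX.1.fromBlocks (conjTranspose_zero) hZ.1) fun w => ?_
  have hw : w = Sum.elim (w ∘ Sum.inl) (w ∘ Sum.inr) := (Sum.elim_comp_inl_inr w).symm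
  rw [star_trivial, fromBlocks_mulVec, zero_mulVec, zero_mulVec, add_zero, zero_add]
  nth_rw 1 [hw]
  rw [sumElim_dotProduct_sumElim]
  exact add_nonneg (hX.dotProduct_mulVec_nonneg _) (hZ.dotProduct_mulVec_nonneg _)

variable [DecidableEq J]

lemma signedDouble_le_smul_one_iff {X : Matrix J J ℝ} {c : ℝ} :
    signedDouble X ≤ c • 1 ↔ X ∈ Set.Icc (-(c • (1 : Matrix J J ℝ))) (c • 1) := by
  have hblocks : c • 1 - signedDouble X = fromBlocks (c • 1 - X) 0 0 (c • 1 + X) := by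
    rw [signedDouble_apply, ← fromBlocks_one, fromBlocks_smul, sub_eq_add_neg,
      fromBlocks_neg, fromBlocks_add]
    simp only [smul_zero, neg_zero, add_zero, neg_neg, sub_eq_add_neg]
  rw [Matrix.le_iff, hblocks, posSemidef_fromBlocks_zero_iff, ← Matrix.le_iff,
    ← nonneg_iff_posSemidef, ← neg_le_iff_add_nonneg', Set.mem_Icc, and_comm]

lemma neg_smul_one_le_signedDouble {X : Matrix J J ℝ} {c : ℝ} (h : signedDouble X ≤ c • 1) :
    -(c • 1) ≤ signedDouble X := by
  obtain ⟨hlo, hhi⟩ := signedDouble_le_smul_one_iff.1 h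
  rw [neg_le, ← map_neg, signedDouble_le_smul_one_iff]
  exact ⟨neg_le_neg hhi, neg_le.1 hlo⟩

end SignedDouble

section PartialColouring

variable {J κ : Type*} [Fintype J] [DecidableEq J] [Fintype κ] {A : κ → Matrix J J ℝ}

lemma conjSum_one_le_card_smul_one (hA : ∀ i, A i ∈ Set.Icc (-1 : Matrix J J ℝ) 1) :
    conjSum A 1 ≤ (Fintype.card κ : ℝ) • 1 := by
  simp only [conjSum_apply, mul_one]
  refine (Finset.sum_le_card_nsmul _ _ 1 fun i _ => ?_).trans_eq (Nat.cast_smul_eq_nsmul ..).symm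
  simpa only [one_pow, one_smul] using mul_self_le_sq_smul_one (c := 1)
    (by simpa only [one_smul] using hA i)

theorem exists_partial_coloring [Nonempty J] (hA : ∀ i, A i ∈ Set.Icc (-1 : Matrix J J ℝ) 1)
    {F σ : ℝ} {P : ℕ} {x₀ : κ → ℝ} (hF : 0 < F) (hAF : ∀ i, frobNormSq (A i) ≤ F)
    (hx₀ : ∀ i, x₀ i ∈ Set.Icc (-1 : ℝ) 1) (hσ : 0 < σ) (hcσ : Fintype.card κ ≤ σ ^ 2)
    (hFσ : 160000 * (P + 2) ^ 5 * min (4 * F) (Fintype.card κ) ^ 2 ≤ σ ^ 4)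
    (hJ : 4 * Fintype.card J ≤ 2 ^ (P + 2)) (hκ : 6 ≤ Fintype.card κ) :
    ∃ z : κ → ℝ, (∀ i, x₀ i + z i ∈ Set.Icc (-1 : ℝ) 1) ∧
      Fintype.card κ ≤ 4 * (Finset.univ.filter fun i => |x₀ i + z i| = 1).card ∧
      linearCombination ℝ A z ∈ Set.Icc (-((56 * σ) • (1 : Matrix J J ℝ))) ((56 * σ) • 1) := by
  classical
  have hdouble (i : κ) : signedDouble (A i) ∈ Set.Icc (-1 : Matrix (J ⊕ J) (J ⊕ J) ℝ) 1 := by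
    have : signedDouble (A i) ≤ (1 : ℝ) • 1 :=
      signedDouble_le_smul_one_iff.2 (by simpa only [one_smul] using hA i)
    simpa only [Set.mem_Icc, one_smul] using And.intro (neg_smul_one_le_signedDouble this) this
  have hsa (i : κ) : IsSelfAdjoint (signedDouble (A i)) :=
    isSelfAdjoint_of_mem_Icc (c := 1) (by simpa only [one_smul] using hdouble i)
  obtain ⟨s, ψ, B, hs, hB, hψ, hBF, hB1⟩ := exists_covariance_truncation hsa
    (mul_pos two_pos hF) fun i => (frobNormSq_signedDouble (A i)).trans_le
      (mul_le_mul_of_nonneg_left (hAF i) two_pos.le)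
  have hBcard := hB1.trans (conjSum_one_le_card_smul_one hdouble)
  have hb : CrossingBound B (min (4 * F) (Fintype.card κ)) := by
    refine min_rec' _ (crossingBound_of_frobNormSq_le hB (by positivity) fun c => ?_)
      (crossingBound_of_conjSum_one_le hB (Nat.cast_nonneg _) hBcard)
    exact (hBF c).trans_eq (by ring)
  obtain ⟨z, hz, htight, hle⟩ := exists_partial_coloring_of_crossingBound (ρ := (P + 2) / σ)
    (A := fun i => signedDouble (A i)) hB hb hx₀ hσ (by positivity) (div_mul_cancel₀ _ hσ.ne')
    (by
      rw [div_pow, mul_div_assoc', div_le_iff₀ (by positivity)]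
      linarith)
    (hBcard.trans (smul_le_smul_of_nonneg_right hcσ zero_le_one))
    (by rw [Fintype.card_sum]; omega) hκ
    (fun z c h => by
      rw [signedDouble_linearCombination] at h ⊢
      exact neg_smul_one_le_signedDouble h)
    ψ (by rwa [Module.finrank_fintype_fun_eq_card, Fintype.card_coe]) hψ
  exact ⟨z, hz, htight,
    signedDouble_le_smul_one_iff.1 ((signedDouble_linearCombination A z).symm.trans_le hle)⟩

end PartialColouring

section Rounding

variable {κ : Type*} [Fintype κ]

/-- The coordinates of a fractional colouring that have not yet reached `1` or `-1`. -/
noncomputable def fractional (x : κ → ℝ) : Finset κ :=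
  Finset.univ.filter fun i => |x i| ≠ 1

lemma mem_fractional {x : κ → ℝ} {i : κ} : i ∈ fractional x ↔ |x i| ≠ 1 := by
  simp only [fractional, Finset.mem_filter, Finset.mem_univ, true_and]

variable {E : Type*} [AddCommGroup E] [Module ℝ E] {A : κ → E}

lemma linearCombination_extend (s : Finset κ) (z : s → ℝ) :
    linearCombination ℝ A (Function.extend Subtype.val z 0) =
      linearCombination ℝ (fun i : s => A i) z := by
  simp only [Fintype.linearCombination_apply]
  rw [← Finset.sum_subset (Finset.subset_univ s) fun i _ hi => ?_, ← Finset.sum_coe_sort]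
  · simp only [Subtype.val_injective.extend_apply]
  · rw [Function.extend_apply' _ _ _ fun ⟨j, hj⟩ => hi (hj ▸ j.2), Pi.zero_apply, zero_smul]

variable [PartialOrder E] [IsOrderedAddMonoid E] [IsOrderedModule ℝ E] {u : E}

lemma linearCombination_mem_Icc (hA : ∀ i, A i ∈ Set.Icc (-u) u) (c : κ → ℝ) :
    linearCombination ℝ A c ∈ Set.Icc (-((∑ i, |c i|) • u)) ((∑ i, |c i|) • u) := by
  have hle (c : κ → ℝ) : linearCombination ℝ A c ≤ (∑ i, |c i|) • u := by
    rw [Fintype.linearCombination_apply, Finset.sum_smul]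
    refine Finset.sum_le_sum fun i _ => ?_
    rcases le_total 0 (c i) with hc | hc
    · rw [abs_of_nonneg hc]
      exact smul_le_smul_of_nonneg_left (hA i).2 hc
    · rw [abs_of_nonpos hc, ← neg_smul_neg]
      exact smul_le_smul_of_nonneg_left (neg_le.1 (hA i).1) (neg_nonneg.2 hc)
  refine ⟨neg_le.1 ?_, hle c⟩
  simpa only [map_neg, Pi.neg_apply, abs_neg] using hle (-c)

lemma exists_signs_of_card_fractional_le (hu : 0 ≤ u) (hA : ∀ i, A i ∈ Set.Icc (-u) u)
    {x : κ → ℝ} (hx : ∀ i, x i ∈ Set.Icc (-1 : ℝ) 1) {b : ℕ} (hb : (fractional x).card ≤ b) :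
    ∃ y : κ → ℝ, (∀ i, y i = 1 ∨ y i = -1) ∧
      linearCombination ℝ A (y - x) ∈ Set.Icc (-((2 * b : ℝ) • u)) ((2 * b : ℝ) • u) := by
  classical
  let y : κ → ℝ := fun i => if |x i| = 1 then x i else 1
  have hsum : ∑ i, |(y - x) i| ≤ 2 * b := by
    calc ∑ i, |(y - x) i| = ∑ i ∈ fractional x, |(y - x) i| := by
          refine (Finset.sum_subset (Finset.subset_univ _) fun i _ hi => ?_).symm
          have : |x i| = 1 := not_not.1 fun h => hi (mem_fractional.2 h)
          simp only [Pi.sub_apply, y, if_pos this, sub_self, abs_zero]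
      _ ≤ (fractional x).card • (2 : ℝ) := by
          refine Finset.sum_le_card_nsmul _ _ _ fun i hi => ?_
          simp only [Pi.sub_apply, y, if_neg (mem_fractional.1 hi)]
          exact abs_le.2 ⟨by linarith [(hx i).2], by linarith [(hx i).1]⟩
      _ ≤ 2 * b := by
          rw [nsmul_eq_mul, mul_comm]
          gcongr
  refine ⟨y, fun i => ?_, ?_⟩
  · by_cases h : |x i| = 1
    · simpa only [y, if_pos h] using eq_or_eq_neg_of_abs_eq h
    · exact .inl (if_neg h)
  · have hmono := smul_le_smul_of_nonneg_right hsum hu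
    exact Set.Icc_subset_Icc (neg_le_neg hmono) hmono (linearCombination_mem_Icc hA _)

lemma exists_signs_of_partial_coloring (hu : 0 ≤ u) (hA : ∀ i, A i ∈ Set.Icc (-u) u)
    {g f : ℕ → ℝ}
    (hpartial : ∀ x : κ → ℝ, (∀ i, x i ∈ Set.Icc (-1 : ℝ) 1) → 6 ≤ (fractional x).card →
      ∃ y : κ → ℝ, (∀ i, y i ∈ Set.Icc (-1 : ℝ) 1) ∧
        4 * (fractional y).card ≤ 3 * (fractional x).card ∧ linearCombination ℝ A (y - x) ∈
          Set.Icc (-(g (fractional x).card • u)) (g (fractional x).card • u))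
    (hf : ∀ m, 10 ≤ f m) (hgf : ∀ m k, 4 * k ≤ 3 * m → g m + f k ≤ f m)
    (x : κ → ℝ) (hx : ∀ i, x i ∈ Set.Icc (-1 : ℝ) 1) :
    ∃ y : κ → ℝ, (∀ i, y i = 1 ∨ y i = -1) ∧ linearCombination ℝ A (y - x) ∈
      Set.Icc (-(f (fractional x).card • u)) (f (fractional x).card • u) := by
  induction hm : (fractional x).card using Nat.strong_induction_on generalizing x with
  | _ m ih =>
    rcases lt_or_ge m 6 with hsmall | hlarge
    · obtain ⟨y, hy, hyx⟩ := exists_signs_of_card_fractional_le hu hA hx (b := 5) (by omega)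
      have hmono : (2 * (5 : ℕ) : ℝ) • u ≤ f m • u :=
        smul_le_smul_of_nonneg_right (by norm_num; exact hf m) hu
      exact ⟨y, hy, Set.Icc_subset_Icc (neg_le_neg hmono) hmono hyx⟩
    · subst hm
      obtain ⟨x', hx', hcard, hxx'⟩ := hpartial x hx hlarge
      obtain ⟨y, hy, hyx'⟩ := ih _ (by omega) x' hx' rfl
      have hmono := smul_le_smul_of_nonneg_right (hgf _ _ hcard) hu
      rw [add_smul] at hmono
      refine ⟨y, hy, Set.Icc_subset_Icc (neg_le_neg hmono) hmono ?_⟩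
      rw [← sub_add_sub_cancel' x' x y, map_add, neg_add]
      exact ⟨add_le_add hxx'.1 hyx'.1, add_le_add hxx'.2 hyx'.2⟩

end Rounding

section FullColouring

variable {J κ : Type*} [Fintype J] [DecidableEq J] [Fintype κ] {A : κ → Matrix J J ℝ}

lemma exists_card_fractional_le [Nonempty J] (hA : ∀ i, A i ∈ Set.Icc (-1 : Matrix J J ℝ) 1)
    {F σ : ℝ} {P : ℕ} {x : κ → ℝ} (hF : 0 < F) (hAF : ∀ i, frobNormSq (A i) ≤ F)
    (hx : ∀ i, x i ∈ Set.Icc (-1 : ℝ) 1) (hσ : 0 < σ) (hcσ : (fractional x).card ≤ σ ^ 2)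
    (hFσ : 160000 * (P + 2) ^ 5 * min (4 * F) (fractional x).card ^ 2 ≤ σ ^ 4)
    (hJ : 4 * Fintype.card J ≤ 2 ^ (P + 2)) (hcard : 6 ≤ (fractional x).card) :
    ∃ y : κ → ℝ, (∀ i, y i ∈ Set.Icc (-1 : ℝ) 1) ∧
      4 * (fractional y).card ≤ 3 * (fractional x).card ∧ linearCombination ℝ A (y - x) ∈
        Set.Icc (-((56 * σ) • (1 : Matrix J J ℝ))) ((56 * σ) • 1) := by
  classical
  rw [← Fintype.card_coe] at hcσ hFσ hcard
  obtain ⟨z, hz, htight, hle⟩ := exists_partial_coloring (fun i : fractional x => hA i) hF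
    (fun i => hAF i) (fun i => hx i) hσ hcσ hFσ hJ hcard
  set y := x + Function.extend Subtype.val z 0
  have hy (i : fractional x) : y i = x i + z i := by
    simp only [y, Pi.add_apply, Subtype.val_injective.extend_apply]
  have hy' (i : κ) (hi : i ∉ fractional x) : y i = x i := by
    simp only [y, Pi.add_apply, Function.extend_apply' z (0 : κ → ℝ) i fun ⟨j, hj⟩ => hi (hj ▸ j.2),
      Pi.zero_apply, add_zero]
  have hfrac : fractional y ⊆
      (Finset.univ.filter fun i : fractional x => ¬|x i + z i| = 1).map (.subtype _) := by
    intro i hi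
    have hix : i ∈ fractional x := by
      by_contra hix
      exact hix (mem_fractional.2 (hy' i hix ▸ mem_fractional.1 hi))
    refine Finset.mem_map.2 ⟨⟨i, hix⟩, Finset.mem_filter.2 ⟨Finset.mem_univ _, ?_⟩, rfl⟩
    exact hy ⟨i, hix⟩ ▸ mem_fractional.1 hi
  have hcardy := Finset.card_le_card hfrac
  have hsplit := Finset.card_filter_add_card_filter_not (s := Finset.univ)
    fun i : fractional x => |x i + z i| = 1
  rw [Finset.card_map] at hcardy
  rw [Finset.card_univ, Fintype.card_coe] at hsplit
  rw [Fintype.card_coe] at htight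
  refine ⟨y, fun i => ?_, by omega, ?_⟩
  · by_cases hi : i ∈ fractional x
    · exact hy ⟨i, hi⟩ ▸ hz ⟨i, hi⟩
    · exact hy' i hi ▸ hx i
  · rwa [add_sub_cancel_left, linearCombination_extend]

end FullColouring

section Parameters

lemma log_natCast_ge {n : ℕ} (hn : 2 ≤ n) : 0.69 ≤ Real.log n := by
  have : Real.log 2 ≤ Real.log n := Real.log_le_log two_pos (by exact_mod_cast hn)
  linarith [Real.log_two_gt_d9]

lemma exists_exponent {n : ℕ} (hn : 2 ≤ n) :
    ∃ P : ℕ, (P + 2 : ℝ) ≤ 12 * Real.log n ∧ 16 * n ^ 2 ≤ 2 ^ (P + 2) := by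
  have hlog := log_natCast_ge hn
  have : (0 : ℝ) < n := by exact_mod_cast two_pos.trans_le hn
  obtain ⟨P, hP⟩ : ∃ P, ⌈10 * Real.log n⌉₊ = P + 2 := by
    refine Nat.exists_eq_add_of_le' ?_
    exact_mod_cast (show (2 : ℝ) ≤ 10 * Real.log n by linarith).trans (Nat.le_ceil _)
  have hcast : (⌈10 * Real.log n⌉₊ : ℝ) = P + 2 := by exact_mod_cast hP
  have hlower : 10 * Real.log n ≤ P + 2 := (Nat.le_ceil _).trans_eq hcast
  have hupper : (P + 2 : ℝ) < 10 * Real.log n + 1 :=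
    hcast.symm.trans_lt (Nat.ceil_lt_add_one (by linarith))
  have hpow : (n : ℝ) ^ 6 ≤ 2 ^ (P + 2) := by
    rw [← Real.log_le_log_iff (by positivity) (by positivity), Real.log_pow, Real.log_pow]
    push_cast
    nlinarith [Real.log_two_gt_d9]
  refine ⟨P, by linarith, ?_⟩
  calc 16 * n ^ 2 = 2 ^ 4 * n ^ 2 := by norm_num
    _ ≤ n ^ 4 * n ^ 2 := by gcongr
    _ = n ^ 6 := by ring
    _ ≤ 2 ^ (P + 2) := by exact_mod_cast hpow

/-- The factor `(m / n) ^ (1 / 12)` by which the discrepancy of a partial colouring shrinks when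
only `m` of the `n` coordinates are still fractional. -/
noncomputable def decay (n m : ℕ) : ℝ := ((m : ℝ) / n) ^ (1 / 12 : ℝ)

variable {n m k : ℕ}

lemma decay_pow (n m : ℕ) : decay n m ^ 12 = (m : ℝ) / n := by
  rw [decay, ← Real.rpow_natCast, ← Real.rpow_mul (by positivity)]
  norm_num

lemma decay_nonneg (n m : ℕ) : 0 ≤ decay n m :=
  Real.rpow_nonneg (by positivity) _

lemma decay_pos (hn : 0 < n) (hm : 0 < m) : 0 < decay n m :=
  Real.rpow_pos_of_pos (by positivity) _

lemma decay_le_one (hmn : m ≤ n) : decay n m ≤ 1 :=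
  Real.rpow_le_one (by positivity) (div_le_one_of_le₀ (by exact_mod_cast hmn) n.cast_nonneg)
    (by norm_num)

lemma decay_le_mul_decay (hk : 4 * k ≤ 3 * m) : decay n k ≤ 47 / 48 * decay n m := by
  have hk' : (k : ℝ) ≤ 3 / 4 * m := by
    have : (4 * k : ℝ) ≤ 3 * m := by exact_mod_cast hk
    linarith
  refine le_of_pow_le_pow_left₀ (n := 12) (by norm_num)
    (mul_nonneg (by norm_num) (decay_nonneg n m)) ?_
  rw [mul_pow, decay_pow, decay_pow]
  calc (k : ℝ) / n ≤ 3 / 4 * m / n := by gcongr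
    _ = 3 / 4 * (m / n) := by ring
    _ ≤ (47 / 48) ^ 12 * (m / n) := by gcongr; norm_num

lemma pow_mul_min_sq_le {L N t : ℝ} (hL : 0 < L) (hN : 0 ≤ N) :
    L ^ 5 * min (4 * (N / L ^ 3)) (N * t ^ 12) ^ 2 ≤ 11 * N ^ 2 * t ^ 4 := by
  set b := min (4 * (N / L ^ 3)) (N * t ^ 12)
  have : 0 ≤ b := le_min (by positivity) (by positivity)
  refine le_of_pow_le_pow_left₀ (n := 3) (by norm_num) (by positivity) ?_
  calc (L ^ 5 * b ^ 2) ^ 3 = L ^ 15 * (b ^ 5 * b) := by ring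
    _ ≤ L ^ 15 * ((4 * (N / L ^ 3)) ^ 5 * (N * t ^ 12)) := by
        gcongr
        exacts [min_le_left _ _, min_le_right _ _]
    _ = 1024 * (N ^ 6 * t ^ 12) := by field_simp; ring
    _ ≤ 1331 * (N ^ 6 * t ^ 12) := by gcongr; norm_num
    _ = (11 * N ^ 2 * t ^ 4) ^ 3 := by ring

lemma min_sq_mul_le_decay_pow {P : ℕ} (hn : 2 ≤ n) (hP : (P + 2 : ℝ) ≤ 12 * Real.log n) :
    160000 * (P + 2 : ℝ) ^ 5 * min (4 * ((n : ℝ) / Real.log n ^ 3)) (m : ℝ) ^ 2 ≤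
      (1000 * √n * decay n m) ^ 4 := by
  have hlog : 0 < Real.log n := lt_of_lt_of_le (by norm_num) (log_natCast_ge hn)
  have hn0 : (n : ℝ) ≠ 0 := by positivity
  have hm : (m : ℝ) = n * decay n m ^ 12 := by rw [decay_pow, mul_div_cancel₀ _ hn0]
  have hmin := pow_mul_min_sq_le (t := decay n m) hlog n.cast_nonneg
  rw [← hm] at hmin
  calc 160000 * (P + 2 : ℝ) ^ 5 * min (4 * (n / Real.log n ^ 3)) (m : ℝ) ^ 2
      ≤ 160000 * (12 * Real.log n) ^ 5 * min (4 * (n / Real.log n ^ 3)) (m : ℝ) ^ 2 := by gcongr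
    _ = 39813120000 * (Real.log n ^ 5 * min (4 * (n / Real.log n ^ 3)) (m : ℝ) ^ 2) := by ring
    _ ≤ 39813120000 * (11 * n ^ 2 * decay n m ^ 4) := by gcongr
    _ ≤ 1000 ^ 4 * (n ^ 2 * decay n m ^ 4) := by
        linarith [show 0 ≤ (n : ℝ) ^ 2 * decay n m ^ 4 by positivity]
    _ = 1000 ^ 4 * ((√n ^ 2) ^ 2 * decay n m ^ 4) := by rw [Real.sq_sqrt n.cast_nonneg]
    _ = (1000 * √n * decay n m) ^ 4 := by ring

lemma natCast_le_decay_sq (hn : 0 < n) (hmn : m ≤ n) :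
    (m : ℝ) ≤ (1000 * √n * decay n m) ^ 2 := by
  have hn0 : (n : ℝ) ≠ 0 := by positivity
  calc (m : ℝ) = n * decay n m ^ 12 := by rw [decay_pow, mul_div_cancel₀ _ hn0]
    _ ≤ n * decay n m ^ 2 := mul_le_mul_of_nonneg_left
        (pow_le_pow_of_le_one (decay_nonneg n m) (decay_le_one hmn) (by norm_num)) n.cast_nonneg
    _ ≤ 1000 ^ 2 * (n * decay n m ^ 2) := le_mul_of_one_le_left (by positivity) (by norm_num)
    _ = 1000 ^ 2 * (√n ^ 2 * decay n m ^ 2) := by rw [Real.sq_sqrt n.cast_nonneg]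
    _ = (1000 * √n * decay n m) ^ 2 := by ring

end Parameters

section FullColouring

variable {J : Type*} [Fintype J] [DecidableEq J] {n : ℕ} {A : Fin n → Matrix J J ℝ}

theorem exists_signs_of_card_le (hn : 2 ≤ n) (hJ : Fintype.card J ≤ 4 * n ^ 2)
    (hA : ∀ i, A i ∈ Set.Icc (-1 : Matrix J J ℝ) 1)
    (hAF : ∀ i, frobNormSq (A i) ≤ n / Real.log n ^ 3) :
    ∃ x : Fin n → ℝ, (∀ i, x i = 1 ∨ x i = -1) ∧ linearCombination ℝ A x ∈
      Set.Icc (-((2688010 * √n) • (1 : Matrix J J ℝ))) ((2688010 * √n) • 1) := by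
  rcases isEmpty_or_nonempty J
  · exact ⟨1, fun _ => .inl rfl, (Subsingleton.elim _ _).le, (Subsingleton.elim _ _).le⟩
  obtain ⟨P, hP, hPn⟩ := exists_exponent hn
  have hlog : 0 < Real.log n := lt_of_lt_of_le (by norm_num) (log_natCast_ge hn)
  have hn0 : 0 < n := two_pos.trans_le hn
  set f : ℕ → ℝ := fun m => 2688000 * √n * decay n m + 10
  obtain ⟨x, hx, hle⟩ := exists_signs_of_partial_coloring (A := A) (u := 1) zero_le_one hA
    (g := fun m => 56 * (1000 * √n * decay n m)) (f := f)
    (fun x hx hcard => exists_card_fractional_le hA (F := (n : ℝ) / Real.log n ^ 3) (P := P)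
      (by positivity) hAF hx
      (by have := decay_pos hn0 (m := (fractional x).card) (by omega); positivity)
      (natCast_le_decay_sq hn0 (card_finset_fin_le _)) (min_sq_mul_le_decay_pow hn hP)
      (by omega) hcard)
    (fun m => le_add_of_nonneg_left (by have := decay_nonneg n m; positivity))
    (fun m k hk => by
      have : √n * decay n k ≤ √n * (47 / 48 * decay n m) := by
        gcongr
        exact decay_le_mul_decay hk
      simp only [f]
      linarith)
    0 (by simp)
  rw [sub_zero] at hle
  have hf : f (fractional (0 : Fin n → ℝ)).card ≤ 2688010 * √n := by
    have hdecay := decay_le_one (card_finset_fin_le (fractional (0 : Fin n → ℝ)))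
    have hsqrt : 1 ≤ √(n : ℝ) := Real.one_le_sqrt.2 (by exact_mod_cast hn0)
    simp only [f]
    nlinarith
  have hmono := smul_le_smul_of_nonneg_right hf (zero_le_one (α := Matrix J J ℝ))
  exact ⟨x, hx, Set.Icc_subset_Icc (neg_le_neg hmono) hmono hle⟩

end FullColouring

/-! ### Dimension reduction -/

section Compression

variable {J s : Type*} [Fintype J] [DecidableEq s] {E : Matrix J s ℝ}

lemma frobNormSq_compression_le [Fintype s] (hE : Eᵀ * E = 1) (X : Matrix J J ℝ) :
    frobNormSq (Eᵀ * X * E) ≤ frobNormSq X := by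
  have hcontr (u : J → ℝ) : (Eᵀ *ᵥ u) ⬝ᵥ (Eᵀ *ᵥ u) ≤ 1 * (u ⬝ᵥ u) :=
    (transpose_mulVec_dotProduct_self_le hE u).trans_eq (one_mul _).symm
  calc frobNormSq (Eᵀ * X * E) = frobNormSq (Eᵀ * (X * E)) := by rw [Matrix.mul_assoc]
    _ ≤ frobNormSq (X * E) := (frobNormSq_mul_le hcontr _).trans_eq (one_mul _)
    _ = frobNormSq (Eᵀ * Xᵀ) := by rw [← transpose_mul]; exact Finset.sum_comm
    _ ≤ frobNormSq Xᵀ := (frobNormSq_mul_le hcontr _).trans_eq (one_mul _)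
    _ = frobNormSq X := Finset.sum_comm

variable [Finite s] [DecidableEq J] {X : Matrix J J ℝ} {c r : ℝ}

lemma compression_mem_Icc (hE : Eᵀ * E = 1) (hX : X ∈ Set.Icc (-1 : Matrix J J ℝ) 1) :
    Eᵀ * X * E ∈ Set.Icc (-1 : Matrix s s ℝ) 1 := by
  have hmono {Y Z : Matrix J J ℝ} (h : Y ≤ Z) : Eᵀ * Y * E ≤ Eᵀ * Z * E := by
    have := ((le_iff.1 h).conjTranspose_mul_mul_same E).nonneg
    rwa [Matrix.mul_sub, Matrix.sub_mul, sub_nonneg] at this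
  have hone : Eᵀ * (1 : Matrix J J ℝ) * E = 1 := by rw [Matrix.mul_one, hE]
  refine ⟨?_, (hmono hX.2).trans_eq hone⟩
  rw [← hone, ← Matrix.neg_mul, ← Matrix.mul_neg]
  exact hmono hX.1

lemma le_smul_one_of_compression_le (hE : Eᵀ * E = 1) (hX : IsSelfAdjoint X) (hc : 0 ≤ c)
    (hr : 0 ≤ r) (h : Eᵀ * X * E ≤ c • 1)
    (hker : ∀ b, Eᵀ *ᵥ b = 0 → (X *ᵥ b) ⬝ᵥ (X *ᵥ b) ≤ r ^ 2 * (b ⬝ᵥ b)) :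
    X ≤ (c + 2 * r) • 1 := by
  cases nonempty_fintype s
  refine le_of_dotProduct_mulVec_le hX ((IsSelfAdjoint.all _).smul (.one _)) fun u => ?_
  rw [dotProduct_smul_one_mulVec]
  set a := E *ᵥ (Eᵀ *ᵥ u)
  set b := (1 - E * Eᵀ) *ᵥ u
  have hu : u = a + b := by
    simp only [a, b, sub_mulVec, one_mulVec, mulVec_mulVec, add_sub_cancel]
  have hnorm : a ⬝ᵥ a ≤ u ⬝ᵥ u := (mulVec_dotProduct_self_of_isometry hE _).trans_le
    (transpose_mulVec_dotProduct_self_le hE u)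
  have hdiag : a ⬝ᵥ X *ᵥ a ≤ c * (u ⬝ᵥ u) := by
    have := dotProduct_mulVec_mono h (Eᵀ *ᵥ u)
    rw [dotProduct_smul_one_mulVec, ← mulVec_mulVec, ← mulVec_mulVec, dotProduct_mulVec,
      ← mulVec_transpose, transpose_transpose] at this
    exact this.trans (mul_le_mul_of_nonneg_left (transpose_mulVec_dotProduct_self_le hE u) hc)
  have hoff : (a + u) ⬝ᵥ X *ᵥ b ≤ 2 * r * (u ⬝ᵥ u) := by
    refine le_of_sq_le_sq ?_ (mul_nonneg (by positivity) (dotProduct_self_nonneg u))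
    calc ((a + u) ⬝ᵥ X *ᵥ b) ^ 2
        ≤ ((a + u) ⬝ᵥ (a + u)) * ((X *ᵥ b) ⬝ᵥ (X *ᵥ b)) := dotProduct_sq_le _ _
      _ ≤ (4 * (u ⬝ᵥ u)) * (r ^ 2 * (u ⬝ᵥ u)) := by
          refine mul_le_mul ?_ ?_ (dotProduct_self_nonneg _)
            (mul_nonneg four_pos.le (dotProduct_self_nonneg u))
          · linarith [add_dotProduct_self_le a u]
          · exact (hker b (transpose_mulVec_one_sub_mulVec hE u)).trans
              (mul_le_mul_of_nonneg_left (one_sub_mulVec_dotProduct_self_le hE u) (sq_nonneg r))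
      _ = (2 * r * (u ⬝ᵥ u)) ^ 2 := by ring
  have hsymm : b ⬝ᵥ X *ᵥ a = a ⬝ᵥ X *ᵥ b := by
    have hX' : Xᵀ = X := hX
    rw [dotProduct_mulVec, ← mulVec_transpose, hX', dotProduct_comm]
  calc u ⬝ᵥ X *ᵥ u = a ⬝ᵥ X *ᵥ a + (a + u) ⬝ᵥ X *ᵥ b := by
        rw [hu]
        simp only [mulVec_add, add_dotProduct, dotProduct_add, hsymm]
        ring
    _ ≤ (c + 2 * r) * (u ⬝ᵥ u) := by linarith

lemma mem_Icc_of_compression_mem_Icc (hE : Eᵀ * E = 1) (hX : IsSelfAdjoint X) (hc : 0 ≤ c)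
    (hr : 0 ≤ r) (h : Eᵀ * X * E ∈ Set.Icc (-(c • (1 : Matrix s s ℝ))) (c • 1))
    (hker : ∀ b, Eᵀ *ᵥ b = 0 → (X *ᵥ b) ⬝ᵥ (X *ᵥ b) ≤ r ^ 2 * (b ⬝ᵥ b)) :
    X ∈ Set.Icc (-((c + 2 * r) • (1 : Matrix J J ℝ))) ((c + 2 * r) • 1) := by
  refine ⟨neg_le.1 (le_smul_one_of_compression_le hE hX.neg hc hr ?_ fun b hb => ?_),
    le_smul_one_of_compression_le hE hX hc hr h.2 hker⟩
  · rw [Matrix.mul_neg, Matrix.neg_mul]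
    exact neg_le.1 h.1
  · rw [neg_mulVec, neg_dotProduct_neg]
    exact hker b hb

end Compression

section DimensionReduction

variable {J : Type*} [Fintype J] {n : ℕ}

lemma sum_dotProduct_self_le {κ : Type*} [Fintype κ] (v : κ → J → ℝ) :
    (∑ i, v i) ⬝ᵥ (∑ i, v i) ≤ Fintype.card κ * ∑ i, v i ⬝ᵥ v i := by
  simp only [dotProduct_self_eq_sum_sq, Finset.sum_apply]
  rw [Finset.sum_comm, Finset.mul_sum]
  exact Finset.sum_le_sum fun a _ => sq_sum_le_card_mul_sum_sq

variable [DecidableEq J] {A : Fin n → Matrix J J ℝ}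

lemma trace_conjSum_one_le (hn : 2 ≤ n) (hA : ∀ i, IsSelfAdjoint (A i))
    (hAF : ∀ i, frobNormSq (A i) ≤ n / Real.log n ^ 3) :
    (conjSum A 1).trace ≤ 4 * n ^ 2 := by
  have hlog := log_natCast_ge hn
  have hbound : (n : ℝ) / Real.log n ^ 3 ≤ 4 * n := by
    have hcube : (0.69 : ℝ) ^ 3 ≤ Real.log n ^ 3 := by gcongr
    rw [div_le_iff₀ (by positivity)]
    nlinarith [(Nat.cast_nonneg n : (0 : ℝ) ≤ n)]
  have htrace (i : Fin n) : (A i * A i).trace = frobNormSq (A i) := by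
    have hA' : (A i)ᵀ = A i := hA i
    rw [← trace_transpose_mul_self, hA']
  simp only [conjSum_apply, mul_one, trace_sum, htrace]
  calc ∑ i, frobNormSq (A i) ≤ ∑ _i : Fin n, 4 * (n : ℝ) :=
        Finset.sum_le_sum fun i _ => (hAF i).trans hbound
    _ = 4 * n ^ 2 := by rw [Finset.sum_const, Finset.card_fin, nsmul_eq_mul]; ring

lemma linearCombination_signs_mulVec_dotProduct_self_le (hA : ∀ i, IsSelfAdjoint (A i))
    {x : Fin n → ℝ} (hx : ∀ i, x i = 1 ∨ x i = -1) (b : J → ℝ) :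
    (linearCombination ℝ A x *ᵥ b) ⬝ᵥ (linearCombination ℝ A x *ᵥ b) ≤
      n * (b ⬝ᵥ conjSum A 1 *ᵥ b) := by
  have hform := dotProduct_conjSum_mul_self_mulVec hA (.one _) b
  simp only [Matrix.one_mul] at hform
  have hterm (i : Fin n) : (x i • A i *ᵥ b) ⬝ᵥ (x i • A i *ᵥ b) = (A i *ᵥ b) ⬝ᵥ (A i *ᵥ b) := by
    rcases hx i with h | h <;> simp [h]
  have := sum_dotProduct_self_le fun i => x i • A i *ᵥ b
  simpa only [hform, Fintype.linearCombination_apply, sum_mulVec, smul_mulVec, hterm,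
    Fintype.card_fin] using this

theorem exists_signs (hn : 2 ≤ n) (hA : ∀ i, A i ∈ Set.Icc (-1 : Matrix J J ℝ) 1)
    (hAF : ∀ i, frobNormSq (A i) ≤ n / Real.log n ^ 3) :
    ∃ x : Fin n → ℝ, (∀ i, x i = 1 ∨ x i = -1) ∧ linearCombination ℝ A x ∈
      Set.Icc (-((2688012 * √n) • (1 : Matrix J J ℝ))) ((2688012 * √n) • 1) := by
  have hsa (i : Fin n) : IsSelfAdjoint (A i) :=
    isSelfAdjoint_of_mem_Icc (c := 1) (by simpa only [one_smul] using hA i)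
  obtain ⟨s, E, hE, hs, htrunc⟩ :=
    exists_spectral_truncation (conjSum_nonneg hsa zero_le_one) 1
  have hcard : Fintype.card s ≤ 4 * n ^ 2 := by
    have := (one_mul (s.card : ℝ)).symm.trans_le (hs.trans (trace_conjSum_one_le hn hsa hAF))
    rw [Fintype.card_coe]
    exact_mod_cast this
  obtain ⟨x, hx, hle⟩ := exists_signs_of_card_le (A := fun i => Eᵀ * A i * E) hn hcard
    (fun i => compression_mem_Icc hE (hA i))
    fun i => (frobNormSq_compression_le hE (A i)).trans (hAF i)
  have hcompress : linearCombination ℝ (fun i => Eᵀ * A i * E) x =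
      Eᵀ * linearCombination ℝ A x * E := by
    simp only [Fintype.linearCombination_apply, Matrix.mul_sum, Matrix.sum_mul, Matrix.mul_smul,
      Matrix.smul_mul]
  rw [hcompress] at hle
  refine ⟨x, hx, ?_⟩
  rw [show 2688012 * √(n : ℝ) = 2688010 * √n + 2 * √n by ring]
  refine mem_Icc_of_compression_mem_Icc hE (isSelfAdjoint_linearCombination hsa x)
    (by positivity) (Real.sqrt_nonneg _) hle fun b hb => ?_
  rw [Real.sq_sqrt n.cast_nonneg]
  exact (linearCombination_signs_mulVec_dotProduct_self_le hsa hx b).trans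
    (mul_le_mul_of_nonneg_left ((htrunc b hb).trans_eq (one_mul _)) n.cast_nonneg)

end DimensionReduction

section OperatorNorm

variable {J : Type*} [Fintype J]

lemma norm_toLp_sq (v : J → ℝ) : ‖WithLp.toLp 2 v‖ ^ 2 = v ⬝ᵥ v := by
  rw [EuclideanSpace.real_norm_sq_eq, dotProduct_self_eq_sum_sq]

variable [DecidableEq J] {X : Matrix J J ℝ} {c : ℝ}

lemma mulVec_dotProduct_self_le_opNorm_sq {I : Type*} [Fintype I] (M : Matrix I J ℝ)
    (v : J → ℝ) : (M *ᵥ v) ⬝ᵥ (M *ᵥ v) ≤ opNorm M ^ 2 * (v ⬝ᵥ v) := by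
  rw [← norm_toLp_sq v, ← mul_pow, ← norm_toLp_sq]
  exact pow_le_pow_left₀ (norm_nonneg _) (ContinuousLinearMap.le_opNorm
    (LinearMap.toContinuousLinearMap (toEuclideanLin M)) (WithLp.toLp 2 v)) 2

lemma mem_Icc_of_opNorm_le (hX : X.IsSymm) (h : opNorm X ≤ c) :
    X ∈ Set.Icc (-(c • (1 : Matrix J J ℝ))) (c • 1) := by
  have hX' : IsSelfAdjoint X := hX
  have hc : IsSelfAdjoint (c • (1 : Matrix J J ℝ)) := (IsSelfAdjoint.all _).smul (.one _)
  have hform (w : J → ℝ) : |w ⬝ᵥ X *ᵥ w| ≤ c * (w ⬝ᵥ w) := by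
    have hc0 : 0 ≤ opNorm X := norm_nonneg _
    have hw := dotProduct_self_nonneg w
    refine (abs_le_of_sq_le_sq ?_ (mul_nonneg hc0 hw)).trans (by gcongr)
    calc (w ⬝ᵥ X *ᵥ w) ^ 2 ≤ (w ⬝ᵥ w) * ((X *ᵥ w) ⬝ᵥ (X *ᵥ w)) := dotProduct_sq_le _ _
      _ ≤ (w ⬝ᵥ w) * (opNorm X ^ 2 * (w ⬝ᵥ w)) := by
          gcongr
          exact mulVec_dotProduct_self_le_opNorm_sq X w
      _ = (opNorm X * (w ⬝ᵥ w)) ^ 2 := by ring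
  refine ⟨le_of_dotProduct_mulVec_le hc.neg hX' fun w => ?_,
    le_of_dotProduct_mulVec_le hX' hc fun w => ?_⟩
  · rw [neg_mulVec, dotProduct_neg, dotProduct_smul_one_mulVec]
    exact (abs_le.1 (hform w)).1
  · rw [dotProduct_smul_one_mulVec]
    exact (abs_le.1 (hform w)).2

lemma opNorm_le_of_mem_Icc (hc : 0 ≤ c)
    (hX : X ∈ Set.Icc (-(c • (1 : Matrix J J ℝ))) (c • 1)) : opNorm X ≤ c := by
  refine ContinuousLinearMap.opNorm_le_bound _ hc fun v => ?_
  refine le_of_sq_le_sq ?_ (mul_nonneg hc (norm_nonneg v))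
  calc ‖WithLp.toLp 2 (X *ᵥ v)‖ ^ 2 = (X *ᵥ v) ⬝ᵥ (X *ᵥ v) := norm_toLp_sq _
    _ ≤ c ^ 2 * (v ⬝ᵥ v) := mulVec_dotProduct_self_le hX v
    _ = (c * ‖v‖) ^ 2 := by rw [mul_pow, ← norm_toLp_sq]

end OperatorNorm

end MatrixSpencer

/-- **Matrix Spencer up to poly-logarithmic rank (Theorem 1.3).** There is a universal
constant `C > 0` such that for all `n ≥ 2`, `d ≥ 1`, and symmetric matrices
`A 1, …, A n ∈ ℝ^{d×d}` with `‖A i‖_op ≤ 1` and `‖A i‖_F² ≤ n / (log n)³`, there exist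
signs `x ∈ {±1}ⁿ` with `‖∑ i, x i • A i‖_op ≤ C √n`. -/
theorem matrix_spencer_polylog_rank :
    ∃ C : ℝ, 0 < C ∧ ∀ (n d : ℕ), 2 ≤ n → 0 < d →
      ∀ A : Fin n → Matrix (Fin d) (Fin d) ℝ,
        (∀ i, (A i).IsSymm) →
        (∀ i, opNorm (A i) ≤ 1) →
        (∀ i, frobNormSq (A i) ≤ (n : ℝ) / (Real.log n) ^ 3) →
        ∃ x : Fin n → ℝ, (∀ i, x i = 1 ∨ x i = -1) ∧
          opNorm (∑ i, x i • A i) ≤ C * Real.sqrt n := by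
  refine ⟨2688012, by norm_num, fun n d hn _ A hsymm hop hfrob => ?_⟩
  obtain ⟨x, hx, hle⟩ := MatrixSpencer.exists_signs hn
    (fun i => by simpa only [one_smul] using MatrixSpencer.mem_Icc_of_opNorm_le (hsymm i) (hop i))
    hfrob
  exact ⟨x, hx, MatrixSpencer.opNorm_le_of_mem_Icc (by positivity) hle⟩
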